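/- arXiv:1009.4736 — 2 statements merged into one kernel-verified Lean document; each statement's English description precedes it below -/
import Mathlib

section
/- Let n be a positive multiple of 3 and let P be a set of n points in general position in the plane (no three collinear) such that E_{≤k}(P) = 3·binom(k+2,2) for every integer k with 0 ≤ k < n/3. Then P is 3-decomposable. -/
/-- The determinant of two planar vectors; its sign tells on which open side of the
(directed) line with direction `u` a point lies. -/
def det2 (u v : ℝ × ℝ) : ℝ := u.1 * v.2 - u.2 * v.1

/-- The standard inner product on the plane; orthogonal projection onto a line with
direction `d` orders points by `dot2 d ·`. -/
def dot2 (u v : ℝ × ℝ) : ℝ := u.1 * v.1 + u.2 * v.2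

/-- `P` is in general position: no three of its points are collinear. -/
def GenPos (P : Finset (ℝ × ℝ)) : Prop :=
  ∀ p ∈ P, ∀ q ∈ P, ∀ r ∈ P, p ≠ q → p ≠ r → q ≠ r →
    ¬ Collinear ℝ ({p, q, r} : Set (ℝ × ℝ))

/-- The line through the two (distinct) points `p, q` of `P` is a `k`-edge of `P`: it
leaves exactly `k` points of `P` on one of its open sides. -/
def IsKEdge (P : Finset (ℝ × ℝ)) (k : ℕ) (p q : ℝ × ℝ) : Prop :=
  p ≠ q ∧
    ({x ∈ (P : Set (ℝ × ℝ)) | 0 < det2 (q - p) (x - p)}.ncard = k ∨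
     {x ∈ (P : Set (ℝ × ℝ)) | det2 (q - p) (x - p) < 0}.ncard = k)

/-- `E_k(P)`: the number of `k`-edges of `P` (pairs of points of `P` whose line leaves
exactly `k` points of `P` on one open side). -/
noncomputable def Ek (P : Finset (ℝ × ℝ)) (k : ℕ) : ℕ :=
  {e : Sym2 (ℝ × ℝ) | ∃ p ∈ P, ∃ q ∈ P, e = s(p, q) ∧ IsKEdge P k p q}.ncard

/-- `E_{≤k}(P) = Σ_{j=0}^{k} E_j(P)`: the number of `(≤ k)`-edges of `P`. -/
noncomputable def EleK (P : Finset (ℝ × ℝ)) (k : ℕ) : ℕ :=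
  ∑ j ∈ Finset.range (k + 1), Ek P j

/-- Along the projection direction `d`, all points of `X` lie strictly between all the
points of `Y` and all the points of `Z` (the `Y`-block on one side, the `Z`-block on
the other). -/
def ProjBetween (d : ℝ × ℝ) (X Y Z : Finset (ℝ × ℝ)) : Prop :=
  (∀ x ∈ X, ∀ y ∈ Y, ∀ z ∈ Z, dot2 d y < dot2 d x ∧ dot2 d x < dot2 d z) ∨
  (∀ x ∈ X, ∀ y ∈ Y, ∀ z ∈ Z, dot2 d z < dot2 d x ∧ dot2 d x < dot2 d y)

/-- `P` is 3-decomposable: it can be partitioned into three equal-sized sets `A, B, C`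
such that some triangle `T = v₁v₂v₃` encloses `P` and the orthogonal projections of `P`
onto the lines of the three sides of `T` show `A` between `B` and `C` on one side, `B`
between `C` and `A` on the second side, and `C` between `A` and `B` on the third side. -/
def PtSet3Decomposable (P : Finset (ℝ × ℝ)) : Prop :=
  ∃ A B C : Finset (ℝ × ℝ), ∃ v₁ v₂ v₃ : ℝ × ℝ,
    A ∪ B ∪ C = P ∧ Disjoint A B ∧ Disjoint A C ∧ Disjoint B C ∧
    A.card = B.card ∧ B.card = C.card ∧
    ¬ Collinear ℝ ({v₁, v₂, v₃} : Set (ℝ × ℝ)) ∧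
    (P : Set (ℝ × ℝ)) ⊆ convexHull ℝ {v₁, v₂, v₃} ∧
    ProjBetween (v₂ - v₁) A B C ∧ ProjBetween (v₃ - v₂) B C A ∧
    ProjBetween (v₁ - v₃) C A B

open Classical in
/-- number of points strictly to the left of `p → q` -/
noncomputable def lft (P : Finset (ℝ × ℝ)) (p q : ℝ × ℝ) : ℕ :=
  (P.filter (fun z => 0 < det2 (q - p) (z - p))).card

/-- determinant form of general position -/
def GP (P : Finset (ℝ × ℝ)) : Prop :=
  ∀ p ∈ P, ∀ q ∈ P, ∀ r ∈ P, p ≠ q → p ≠ r → q ≠ r → det2 (q - p) (r - p) ≠ 0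

def IsExt (P : Finset (ℝ × ℝ)) (v : ℝ × ℝ) : Prop :=
  v ∈ P ∧ ∃ h : ℝ × ℝ, ∀ z ∈ P, z ≠ v → 0 < det2 h (z - v)

open Classical in
noncomputable def F1 (P : Finset (ℝ × ℝ)) (v : ℝ × ℝ) (k : ℕ) : Finset (ℝ × ℝ) :=
  (P.erase v).filter (fun x => lft P v x ≤ k)

open Classical in
noncomputable def F2 (P : Finset (ℝ × ℝ)) (v : ℝ × ℝ) (k : ℕ) : Finset (ℝ × ℝ) :=
  (P.erase v).filter (fun x => lft P x v ≤ k)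

open Classical in
noncomputable def DD (P : Finset (ℝ × ℝ)) (k : ℕ) : Finset ((ℝ × ℝ) × (ℝ × ℝ)) :=
  P.offDiag.filter (fun e => lft P e.1 e.2 = k)

open Classical in
noncomputable def Dv (P : Finset (ℝ × ℝ)) (v : ℝ × ℝ) (k : ℕ) : Finset ((ℝ × ℝ) × (ℝ × ℝ)) :=
  (DD P k).filter (fun e => det2 (e.2 - e.1) (v - e.1) < 0)

open Classical in
noncomputable def LtS (P : Finset (ℝ × ℝ)) (K : ℕ) : Finset ((ℝ × ℝ) × (ℝ × ℝ)) :=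
  P.offDiag.filter (fun e => lft P e.1 e.2 < K)

lemma gp_of_genPos {P : Finset (ℝ × ℝ)} (h : GenPos P) : GP P := by
  intro p hp q hq r hr hpq hpr hqr h0
  apply h p hp q hq r hr hpq hpr hqr
  rw [collinear_iff_of_mem (p₀ := p) (by simp)]
  refine ⟨q - p, ?_⟩
  have hne : (q.1 - p.1) ^ 2 + (q.2 - p.2) ^ 2 ≠ 0 := by
    intro h1
    apply hpq
    have h2 : q.1 - p.1 = 0 := by nlinarith [sq_nonneg (q.1 - p.1), sq_nonneg (q.2 - p.2)]
    have h3 : q.2 - p.2 = 0 := by nlinarith [sq_nonneg (q.1 - p.1), sq_nonneg (q.2 - p.2)]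
    ext <;> linarith
  simp only [det2, Prod.fst_sub, Prod.snd_sub] at h0
  intro x hx
  simp only [Set.mem_insert_iff, Set.mem_singleton_iff] at hx
  rcases hx with rfl | rfl | rfl
  · exact ⟨0, by simp⟩
  · exact ⟨1, by simp⟩
  · refine ⟨((q.1 - p.1) * (x.1 - p.1) + (q.2 - p.2) * (x.2 - p.2)) /
      ((q.1 - p.1) ^ 2 + (q.2 - p.2) ^ 2), ?_⟩
    ext
    · simp only [vadd_eq_add, Prod.fst_add, Prod.smul_fst, Prod.fst_sub, smul_eq_mul]
      field_simp
      linear_combination (-(q.2 - p.2)) * h0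
    · simp only [vadd_eq_add, Prod.snd_add, Prod.smul_snd, Prod.snd_sub, smul_eq_mul]
      field_simp
      linear_combination (q.1 - p.1) * h0

lemma gp_erase {P : Finset (ℝ × ℝ)} (h : GP P) (v : ℝ × ℝ) : GP (P.erase v) := by
  intro p hp q hq r hr
  exact h p (Finset.mem_of_mem_erase hp) q (Finset.mem_of_mem_erase hq) r
    (Finset.mem_of_mem_erase hr)

lemma lft_rev (P : Finset (ℝ × ℝ)) (p q : ℝ × ℝ) [DecidablePred fun z => det2 (q - p) (z - p) < 0] :
    lft P q p = (P.filter (fun z => det2 (q - p) (z - p) < 0)).card := by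
  classical
  unfold lft
  congr 1
  ext z
  simp only [Finset.mem_filter]
  simp only [det2, Prod.fst_sub, Prod.snd_sub]
  constructor <;> rintro ⟨h1, h2⟩ <;> exact ⟨h1, by nlinarith⟩

lemma lft_add {P : Finset (ℝ × ℝ)} (h : GP P) {p q : ℝ × ℝ} (hp : p ∈ P) (hq : q ∈ P)
    (hpq : p ≠ q) : lft P p q + lft P q p + 2 = P.card := by
  classical
  rw [lft_rev P p q]
  unfold lft
  have h2 : ({p, q} : Finset (ℝ × ℝ)).card = 2 := Finset.card_pair hpq
  rw [← h2, ← Finset.card_union_of_disjoint, ← Finset.card_union_of_disjoint]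
  · congr 1
    ext z
    simp only [Finset.mem_union, Finset.mem_filter, Finset.mem_insert, Finset.mem_singleton]
    constructor
    · rintro ((h | h) | (h | h))
      · exact h.1
      · exact h.1
      · exact h ▸ hp
      · exact h ▸ hq
    · intro hz
      by_cases hzp : z = p
      · exact Or.inr (Or.inl hzp)
      by_cases hzq : z = q
      · exact Or.inr (Or.inr hzq)
      have := h p hp q hq z hz hpq (Ne.symm hzp) (Ne.symm hzq)
      rcases lt_or_gt_of_ne this with h' | h'
      · exact Or.inl (Or.inr ⟨hz, h'⟩)
      · exact Or.inl (Or.inl ⟨hz, h'⟩)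
  · rw [Finset.disjoint_left]
    intro z hz hz'
    simp only [Finset.mem_union, Finset.mem_filter, Finset.mem_insert, Finset.mem_singleton] at hz hz'
    simp only [det2, Prod.fst_sub, Prod.snd_sub] at hz
    rcases hz' with rfl | rfl
    · rcases hz with ⟨_, h⟩ | ⟨_, h⟩ <;> nlinarith
    · rcases hz with ⟨_, h⟩ | ⟨_, h⟩ <;> nlinarith
  · rw [Finset.disjoint_left]
    intro z hz hz'
    simp only [Finset.mem_filter] at hz hz'
    linarith [hz.2, hz'.2]

lemma exists_ext {P : Finset (ℝ × ℝ)} (h : P.Nonempty) : ∃ v, IsExt P v := by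
  obtain ⟨v, hv, hmax⟩ := P.exists_max_image (fun z => z.1 ^ 2 + z.2 ^ 2) h
  refine ⟨v, hv, (-v.2, v.1), ?_⟩
  intro z hz hzv
  have h1 := hmax z hz
  have h2 : 0 < (z.1 - v.1) ^ 2 + (z.2 - v.2) ^ 2 := by
    by_contra h3
    apply hzv
    have h4 : z.1 - v.1 = 0 := by nlinarith [sq_nonneg (z.1 - v.1), sq_nonneg (z.2 - v.2)]
    have h5 : z.2 - v.2 = 0 := by nlinarith [sq_nonneg (z.1 - v.1), sq_nonneg (z.2 - v.2)]
    ext <;> linarith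
  simp only [det2, Prod.fst_sub, Prod.snd_sub]
  nlinarith

lemma rank_surj {ι : Type*} (s : Finset ι) (f : ι → ℝ) (hf : Set.InjOn f s) :
    s.image (fun x => (s.filter (fun z => f z < f x)).card) = Finset.range s.card := by
  classical
  apply Finset.eq_of_subset_of_card_le
  · intro r hr
    obtain ⟨x, hx, rfl⟩ := Finset.mem_image.1 hr
    rw [Finset.mem_range]
    apply Finset.card_lt_card
    refine ⟨Finset.filter_subset _ _, fun h => ?_⟩
    have := h hx
    simp at this
  · rw [Finset.card_range, Finset.card_image_of_injOn]
    have key : ∀ x ∈ s, ∀ y ∈ s, f x < f y →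
        (s.filter (fun z => f z < f x)).card < (s.filter (fun z => f z < f y)).card := by
      intro x hx y hy hxy
      apply Finset.card_lt_card
      refine ⟨fun z hz => ?_, fun h => ?_⟩
      · simp only [Finset.mem_filter] at hz ⊢
        exact ⟨hz.1, hz.2.trans hxy⟩
      · have := h (Finset.mem_filter.2 ⟨hx, hxy⟩)
        simp at this
    intro x hx y hy hxy
    rcases lt_trichotomy (f x) (f y) with h | h | h
    · have := key x hx y hy h
      simp only at hxy; omega
    · exact hf hx hy h
    · have := key y hy x hx h
      simp only at hxy; omega

lemma rank_card {ι : Type*} (s : Finset ι) (f : ι → ℝ) (hf : Set.InjOn f s) (k : ℕ)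
    (hk : k + 1 ≤ s.card) :
    (s.filter (fun x => (s.filter (fun z => f z < f x)).card ≤ k)).card = k + 1 := by
  classical
  have hs := rank_surj s f hf
  have hinj : Set.InjOn (fun x => (s.filter (fun z => f z < f x)).card) s := by
    rw [← Finset.card_image_iff, hs, Finset.card_range]
  have : (s.filter (fun x => (s.filter (fun z => f z < f x)).card ≤ k)).image
      (fun x => (s.filter (fun z => f z < f x)).card) = Finset.range (k + 1) := by
    ext r
    simp only [Finset.mem_image, Finset.mem_filter, Finset.mem_range]
    constructor
    · rintro ⟨x, ⟨_, hx⟩, rfl⟩; omega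
    · intro hr
      have : r ∈ Finset.range s.card := Finset.mem_range.2 (by omega)
      rw [← hs, Finset.mem_image] at this
      obtain ⟨x, hx, rfl⟩ := this
      exact ⟨x, ⟨hx, by omega⟩, rfl⟩
  rw [← Finset.card_range (k + 1), ← this, Finset.card_image_of_injOn]
  exact hinj.mono (by intro x hx; exact (Finset.mem_filter.1 hx).1)

lemma ext_key {P : Finset (ℝ × ℝ)} {v : ℝ × ℝ} (hv : IsExt P v) (h : GP P) :
    ∃ f : ℝ × ℝ → ℝ, Set.InjOn f (P.erase v : Finset (ℝ × ℝ)) ∧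
      ∀ x ∈ P, ∀ z ∈ P, x ≠ v → z ≠ v → (0 < det2 (x - v) (z - v) ↔ f z < f x) := by
  obtain ⟨hvP, d, hd⟩ := hv
  have key : ∀ x ∈ P, ∀ z ∈ P, x ≠ v → z ≠ v → (0 < det2 (x - v) (z - v) ↔
      dot2 d (z - v) / det2 d (z - v) < dot2 d (x - v) / det2 d (x - v)) := by
    intro x hx z hz hxv hzv
    have h1 := hd x hx hxv
    have h2 := hd z hz hzv
    rw [div_lt_div_iff₀ h2 h1]
    have h3 : 0 < d.1 ^ 2 + d.2 ^ 2 := by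
      by_contra h3
      have h4 : d.1 = 0 := by nlinarith [sq_nonneg d.1, sq_nonneg d.2]
      have h5 : d.2 = 0 := by nlinarith [sq_nonneg d.1, sq_nonneg d.2]
      simp [det2, h4, h5] at h1
    have h6 : dot2 d (x - v) * det2 d (z - v) - dot2 d (z - v) * det2 d (x - v) =
        (d.1 ^ 2 + d.2 ^ 2) * det2 (x - v) (z - v) := by
      simp only [dot2, det2]; ring
    rw [← sub_pos (b := dot2 d (z - v) * det2 d (x - v)), h6]
    constructor
    · intro h7; positivity
    · intro h7; exact (pos_iff_pos_of_mul_pos h7).1 h3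
  refine ⟨fun z => dot2 d (z - v) / det2 d (z - v), ?_, key⟩
  intro x hx z hz hxz
  simp only [Finset.coe_erase, Set.mem_sdiff, Finset.mem_coe, Set.mem_singleton_iff] at hx hz
  by_contra hne
  have h1 := h v hvP x hx.1 z hz.1 (Ne.symm hx.2) (Ne.symm hz.2) hne
  rcases lt_or_gt_of_ne h1 with h2 | h2
  · have : 0 < det2 (z - v) (x - v) := by simp only [det2] at h2 ⊢; linarith
    rw [key z hz.1 x hx.1 hz.2 hx.2] at this
    simp only at hxz; linarith
  · rw [key x hx.1 z hz.1 hx.2 hz.2] at h2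
    simp only at hxz; linarith

lemma det2_self (x : ℝ × ℝ) : det2 x x = 0 := by simp only [det2]; ring
lemma det2_anti (x y : ℝ × ℝ) : det2 x y = - det2 y x := by simp only [det2]; ring
lemma det2_zero (x : ℝ × ℝ) : det2 x 0 = 0 := by simp [det2]

lemma lft_key {P : Finset (ℝ × ℝ)} {v : ℝ × ℝ} (f : ℝ × ℝ → ℝ)
    (hf : ∀ x ∈ P, ∀ z ∈ P, x ≠ v → z ≠ v → (0 < det2 (x - v) (z - v) ↔ f z < f x))
    {x : ℝ × ℝ} (hx : x ∈ P) (hxv : x ≠ v) :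
    lft P v x = ((P.erase v).filter (fun z => f z < f x)).card ∧
    lft P x v = ((P.erase v).filter (fun z => - f z < - f x)).card := by
  classical
  constructor
  · unfold lft
    congr 1
    ext z
    simp only [Finset.mem_filter, Finset.mem_erase]
    constructor
    · rintro ⟨hz, h⟩
      have hzv : z ≠ v := by
        rintro rfl
        rw [sub_self, det2_zero] at h; exact lt_irrefl _ h
      exact ⟨⟨hzv, hz⟩, (hf x hx z hz hxv hzv).1 h⟩
    · rintro ⟨⟨hzv, hz⟩, h⟩
      exact ⟨hz, (hf x hx z hz hxv hzv).2 h⟩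
  · rw [lft_rev P v x]
    congr 1
    ext z
    simp only [Finset.mem_filter, Finset.mem_erase]
    constructor
    · rintro ⟨hz, h⟩
      have hzv : z ≠ v := by
        rintro rfl
        rw [sub_self, det2_zero] at h; exact lt_irrefl _ h
      have := (hf z hz x hx hzv hxv).1 (by rw [det2_anti]; linarith)
      exact ⟨⟨hzv, hz⟩, by linarith⟩
    · rintro ⟨⟨hzv, hz⟩, h⟩
      have := (hf z hz x hx hzv hxv).2 (by linarith)
      rw [det2_anti] at this
      exact ⟨hz, by linarith⟩

lemma F1_card {P : Finset (ℝ × ℝ)} {v : ℝ × ℝ} (hv : IsExt P v) (h : GP P) {k : ℕ}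
    (hk : k + 2 ≤ P.card) : (F1 P v k).card = k + 1 := by
  classical
  obtain ⟨f, hinj, hf⟩ := ext_key hv h
  have hc : k + 1 ≤ (P.erase v).card := by rw [Finset.card_erase_of_mem hv.1]; omega
  rw [← rank_card _ f hinj k hc]
  unfold F1
  congr 1
  apply Finset.filter_congr
  intro x hx
  rw [(lft_key f hf (Finset.mem_of_mem_erase hx) (Finset.ne_of_mem_erase hx)).1]

lemma F2_card {P : Finset (ℝ × ℝ)} {v : ℝ × ℝ} (hv : IsExt P v) (h : GP P) {k : ℕ}
    (hk : k + 2 ≤ P.card) : (F2 P v k).card = k + 1 := by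
  classical
  obtain ⟨f, hinj, hf⟩ := ext_key hv h
  have hc : k + 1 ≤ (P.erase v).card := by rw [Finset.card_erase_of_mem hv.1]; omega
  rw [← rank_card _ (fun z => - f z) (fun x hx y hy hxy => hinj hx hy (by simpa using hxy)) k hc]
  unfold F2
  congr 1
  apply Finset.filter_congr
  intro x hx
  rw [(lft_key f hf (Finset.mem_of_mem_erase hx) (Finset.ne_of_mem_erase hx)).2]

lemma F2_bdry {P : Finset (ℝ × ℝ)} {v : ℝ × ℝ} (hv : IsExt P v) (h : GP P) {k : ℕ}
    (hk : k + 2 ≤ P.card) : ∃ q ∈ P, q ≠ v ∧ lft P q v = k := by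
  classical
  obtain ⟨f, hinj, hf⟩ := ext_key hv h
  have hc : k + 1 ≤ (P.erase v).card := by rw [Finset.card_erase_of_mem hv.1]; omega
  have hs := rank_surj (P.erase v) (fun z => - f z)
    (fun x hx y hy hxy => hinj hx hy (by simpa using hxy))
  have : k ∈ Finset.range (P.erase v).card := Finset.mem_range.2 (by omega)
  rw [← hs, Finset.mem_image] at this
  obtain ⟨q, hq, rfl⟩ := this
  exact ⟨q, Finset.mem_of_mem_erase hq, Finset.ne_of_mem_erase hq,
    (lft_key f hf (Finset.mem_of_mem_erase hq) (Finset.ne_of_mem_erase hq)).2⟩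

lemma ext_order {P : Finset (ℝ × ℝ)} {v : ℝ × ℝ} (hv : IsExt P v) (h : GP P) {x z : ℝ × ℝ}
    (hx : x ∈ P) (hz : z ∈ P) (hxv : x ≠ v) (hzv : z ≠ v) :
    0 < det2 (x - v) (z - v) ↔ lft P x v < lft P z v := by
  classical
  obtain ⟨f, hinj, hf⟩ := ext_key hv h
  rw [hf x hx z hz hxv hzv, (lft_key f hf hx hxv).2, (lft_key f hf hz hzv).2]
  constructor
  · intro hlt
    apply Finset.card_lt_card
    refine ⟨fun u hu => ?_, fun hc => ?_⟩
    · simp only [Finset.mem_filter] at hu ⊢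
      exact ⟨hu.1, by linarith [hu.2]⟩
    · have := hc (Finset.mem_filter.2 ⟨Finset.mem_erase.2 ⟨hxv, hx⟩, by linarith⟩)
      simp at this
  · intro hlt
    by_contra hcon
    apply absurd hlt
    rw [not_lt]
    apply Finset.card_le_card
    intro u hu
    simp only [Finset.mem_filter] at hu ⊢
    exact ⟨hu.1, by linarith [hu.2]⟩

lemma sweep {ι : Type*} (s : Finset ι) (α β : ι → ℝ) (k : ℕ) (t₀ : ℝ)
    (h0 : (s.filter (fun z => 0 < α z + t₀ * β z)).card ≤ k)
    (h1 : k + 1 ≤ (s.filter (fun z => 0 < β z)).card)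
    (hinj : ∀ t, ∀ y ∈ s, ∀ z ∈ s, 0 < β y → 0 < β z → α y + t * β y = 0 → α z + t * β z = 0 →
      y = z) :
    ∃ t, t₀ ≤ t ∧ ∃ y ∈ s, 0 < β y ∧ α y + t * β y = 0 ∧
      (s.filter (fun z => 0 < α z + t * β z)).card = k := by
  classical
  set τ : ι → ℝ := fun z => - α z / β z with hτ
  have e0 : ∀ z, 0 < β z → α z + τ z * β z = 0 := by
    intro z hz; simp only [hτ]; field_simp; ring
  have e1 : ∀ z t, 0 < β z → (0 < α z + t * β z ↔ τ z < t) := by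
    intro z t hz
    have := e0 z hz
    constructor
    · intro h; by_contra hc; nlinarith
    · intro h; nlinarith
  have e2 : ∀ z t, 0 < β z → (0 ≤ α z + t * β z ↔ τ z ≤ t) := by
    intro z t hz
    have := e0 z hz
    constructor
    · intro h; by_contra hc; nlinarith
    · intro h; nlinarith
  let N : ℝ → Finset ι := fun t => s.filter (fun z => 0 < α z + t * β z)
  let M : ℝ → Finset ι := fun t => s.filter (fun z => 0 < α z + t * β z ∨ (0 < β z ∧ τ z = t))
  let G := s.filter (fun y => 0 < β y ∧ t₀ ≤ τ y ∧ k + 1 ≤ (M (τ y)).card)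
  have hG : G.Nonempty := by
    have hne : (s.filter (fun z => 0 < β z)).Nonempty := by
      rw [← Finset.card_pos]; omega
    obtain ⟨y, hy, hmax⟩ := Finset.exists_max_image _ τ hne
    rw [Finset.mem_filter] at hy
    refine ⟨y, Finset.mem_filter.2 ⟨hy.1, hy.2, ?_, ?_⟩⟩
    · by_contra hc
      push Not at hc
      have : (s.filter (fun z => 0 < β z)) ⊆ (s.filter (fun z => 0 < α z + t₀ * β z)) := by
        intro z hz
        have h3 := hmax z hz
        rw [Finset.mem_filter] at hz ⊢
        exact ⟨hz.1, (e1 z t₀ hz.2).2 (by linarith)⟩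
      have := Finset.card_le_card this
      omega
    · refine h1.trans (Finset.card_le_card ?_)
      intro z hz
      have h3 := hmax z hz
      rw [Finset.mem_filter] at hz ⊢
      refine ⟨hz.1, ?_⟩
      rcases h3.lt_or_eq with h4 | h4
      · exact Or.inl ((e1 z _ hz.2).2 h4)
      · exact Or.inr ⟨hz.2, h4⟩
  obtain ⟨y, hy, hmin⟩ := Finset.exists_min_image G τ hG
  obtain ⟨hys, hβ, hty, hM⟩ := Finset.mem_filter.1 hy
  refine ⟨τ y, hty, y, hys, hβ, e0 y hβ, ?_⟩
  have hMN : M (τ y) ⊆ insert y (N (τ y)) := by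
    intro z hz
    rw [Finset.mem_filter] at hz
    rw [Finset.mem_insert]
    rcases hz.2 with h | ⟨h, h'⟩
    · exact Or.inr (Finset.mem_filter.2 ⟨hz.1, h⟩)
    · exact Or.inl (hinj (τ y) z hz.1 y hys h hβ (h' ▸ e0 z h) (e0 y hβ))
  have hle := (Finset.card_le_card hMN).trans (Finset.card_insert_le _ _)
  have hlow : k ≤ (N (τ y)).card := by omega
  refine le_antisymm ?_ hlow
  by_contra hcon
  push Not at hcon
  change k < (N (τ y)).card at hcon
  by_cases hQ : (s.filter (fun z => 0 < β z ∧ t₀ ≤ τ z ∧ τ z < τ y)).Nonempty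
  · obtain ⟨z, hz, hmax⟩ := Finset.exists_max_image _ τ hQ
    obtain ⟨hzs, hzβ, hzt, hzy⟩ := Finset.mem_filter.1 hz
    have hsub : N (τ y) ⊆ M (τ z) := by
      intro u hu
      rw [Finset.mem_filter] at hu ⊢
      refine ⟨hu.1, ?_⟩
      rcases le_or_gt (β u) 0 with hb | hb
      · left; nlinarith [hu.2]
      · have h5 := (e1 u _ hb).1 hu.2
        have h6 : τ u ≤ τ z := by
          by_cases h7 : t₀ ≤ τ u
          · exact hmax u (Finset.mem_filter.2 ⟨hu.1, hb, h7, h5⟩)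
          · linarith
        rcases h6.lt_or_eq with h4 | h4
        · exact Or.inl ((e1 u _ hb).2 h4)
        · exact Or.inr ⟨hb, h4⟩
    have h8 := Finset.card_le_card hsub
    have := hmin z (Finset.mem_filter.2 ⟨hzs, hzβ, hzt, by omega⟩)
    linarith
  · have hsub : N (τ y) ⊆ s.filter (fun z => 0 < α z + t₀ * β z) := by
      intro u hu
      rw [Finset.mem_filter] at hu ⊢
      refine ⟨hu.1, ?_⟩
      rcases le_or_gt (β u) 0 with hb | hb
      · nlinarith [hu.2]
      · have h5 := (e1 u _ hb).1 hu.2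
        rw [e1 u _ hb]
        by_contra h7
        exact hQ ⟨u, Finset.mem_filter.2 ⟨hu.1, hb, by linarith, h5⟩⟩
    have h8 := Finset.card_le_card hsub
    omega

lemma rot {P : Finset (ℝ × ℝ)} (h : GP P) {x v w : ℝ × ℝ} (hx : x ∈ P) {k : ℕ}
    [DecidablePred fun z => 0 < det2 w (z - x)]
    (h0 : (P.filter (fun z => 0 < det2 w (z - x))).card ≤ k) (h1 : k + 1 ≤ lft P v x)
    (hw : det2 w (v - x) < 0) :
    ∃ y ∈ P, y ≠ x ∧ 0 < det2 (x - v) (y - x) ∧ det2 w (y - x) ≤ 0 ∧ lft P y x = k ∧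
      det2 (x - y) (v - y) < 0 := by
  classical
  have hb : ∀ z, det2 (x - v) (z - x) = det2 (x - v) (z - v) := by
    intro z; simp only [det2, Prod.fst_sub, Prod.snd_sub]; ring
  obtain ⟨t, ht, y, hy, hβ, hz, hc⟩ := sweep P (fun z => det2 w (z - x))
    (fun z => det2 (x - v) (z - x)) k 0 (by
      refine le_trans (Finset.card_le_card ?_) h0
      intro z hz
      simpa using hz) (by
      unfold lft at h1
      refine h1.trans (Finset.card_le_card ?_)
      intro z hz
      simpa [hb] using hz) (by
      intro t y hy z hz hyb hzb hy0 hz0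
      by_contra hne
      have hyx : x ≠ y := by
        rintro rfl; simp [det2_zero] at hyb
      have hzx : x ≠ z := by
        rintro rfl; simp [det2_zero] at hzb
      apply h x hx y hy z hz hyx hzx hne
      have hk : det2 w (v - x) * det2 (y - x) (z - x) =
          (det2 w (z - x) + t * det2 (x - v) (z - x)) * det2 (x - v) (y - x)
          - (det2 w (y - x) + t * det2 (x - v) (y - x)) * det2 (x - v) (z - x) := by
        simp only [det2, Prod.fst_sub, Prod.snd_sub]; ring
      rw [hy0, hz0] at hk
      simp only [zero_mul, sub_zero, mul_eq_zero] at hk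
      rcases hk with hk | hk
      · exact absurd hk hw.ne
      · exact hk)
  have hyx : y ≠ x := by
    rintro rfl; simp [det2_zero] at hβ
  refine ⟨y, hy, hyx, hβ, by nlinarith, ?_, ?_⟩
  · rw [← hc]
    unfold lft
    congr 1
    apply Finset.filter_congr
    intro z hzP
    have e : det2 (x - v) (y - x) * (det2 w (z - x) + t * det2 (x - v) (z - x)) =
        (- det2 w (v - x)) * det2 (x - y) (z - y) +
        (det2 w (y - x) + t * det2 (x - v) (y - x)) * det2 (x - v) (z - x) := by
      simp only [det2, Prod.fst_sub, Prod.snd_sub]; ring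
    rw [hz, zero_mul, add_zero] at e
    constructor
    · intro h3
      have : 0 < (- det2 w (v - x)) * det2 (x - y) (z - y) := mul_pos (by linarith) h3
      rw [← e] at this
      exact (pos_iff_pos_of_mul_pos this).1 hβ
    · intro h3
      have : 0 < det2 (x - v) (y - x) * (det2 w (z - x) + t * det2 (x - v) (z - x)) :=
        mul_pos hβ h3
      rw [e] at this
      exact (pos_iff_pos_of_mul_pos this).1 (by linarith)
  · have : det2 (x - y) (v - y) = - det2 (x - v) (y - x) := by
      simp only [det2, Prod.fst_sub, Prod.snd_sub]; ring
    linarith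

lemma mem_DD {P : Finset (ℝ × ℝ)} {k : ℕ} {e : (ℝ × ℝ) × (ℝ × ℝ)} :
    e ∈ DD P k ↔ (e.1 ∈ P ∧ e.2 ∈ P ∧ e.1 ≠ e.2) ∧ lft P e.1 e.2 = k := by
  simp [DD]

lemma mem_Dv {P : Finset (ℝ × ℝ)} {v : ℝ × ℝ} {k : ℕ} {e : (ℝ × ℝ) × (ℝ × ℝ)} :
    e ∈ Dv P v k ↔ ((e.1 ∈ P ∧ e.2 ∈ P ∧ e.1 ≠ e.2) ∧ lft P e.1 e.2 = k) ∧
      det2 (e.2 - e.1) (v - e.1) < 0 := by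
  simp only [Dv, Finset.mem_filter, mem_DD]

lemma mem_LtS {P : Finset (ℝ × ℝ)} {k : ℕ} {e : (ℝ × ℝ) × (ℝ × ℝ)} :
    e ∈ LtS P k ↔ (e.1 ∈ P ∧ e.2 ∈ P ∧ e.1 ≠ e.2) ∧ lft P e.1 e.2 < k := by
  simp [LtS]

lemma mem_F1 {P : Finset (ℝ × ℝ)} {v x : ℝ × ℝ} {k : ℕ} :
    x ∈ F1 P v k ↔ (x ≠ v ∧ x ∈ P) ∧ lft P v x ≤ k := by
  simp [F1]

lemma mem_F2 {P : Finset (ℝ × ℝ)} {v x : ℝ × ℝ} {k : ℕ} :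
    x ∈ F2 P v k ↔ (x ≠ v ∧ x ∈ P) ∧ lft P x v ≤ k := by
  simp [F2]

lemma F2_sub_heads {P : Finset (ℝ × ℝ)} (h : GP P) {v : ℝ × ℝ} (hv : v ∈ P) {k : ℕ}
    (hk : 2 * k + 3 ≤ P.card) : F2 P v k ⊆ (Dv P v k).image Prod.snd := by
  classical
  intro x hx
  obtain ⟨⟨hxv, hxP⟩, hl⟩ := mem_F2.1 hx
  have hadd := lft_add h hv hxP (Ne.symm hxv)
  let w₀ : ℝ × ℝ := ((x - v).2, -(x - v).1)
  have hw₀ : det2 w₀ (v - x) < 0 := by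
    simp only [w₀, det2, Prod.fst_sub, Prod.snd_sub]
    by_contra hc
    apply hxv
    have h4 : x.1 - v.1 = 0 := by nlinarith [sq_nonneg (x.1 - v.1), sq_nonneg (x.2 - v.2)]
    have h5 : x.2 - v.2 = 0 := by nlinarith [sq_nonneg (x.1 - v.1), sq_nonneg (x.2 - v.2)]
    ext <;> linarith
  obtain ⟨t, ht⟩ := (P.image (fun z => - det2 w₀ (z - x) / det2 (x - v) (z - x))).bddBelow
  have hdet : ∀ z, det2 (w₀ + t • (x - v)) (z - x) =
      det2 w₀ (z - x) + t * det2 (x - v) (z - x) := by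
    intro z
    simp only [det2, Prod.fst_add, Prod.snd_add, Prod.smul_fst, Prod.smul_snd, smul_eq_mul]; ring
  obtain ⟨y, hy, hyx, -, -, hyl, hyv⟩ := rot (k := k) (v := v) (w := w₀ + t • (x - v)) h hxP (by
      refine le_trans ?_ hl
      rw [lft_rev P v x]
      apply Finset.card_le_card
      intro z hz
      rw [Finset.mem_filter] at hz ⊢
      refine ⟨hz.1, ?_⟩
      have e : det2 (x - v) (z - v) = det2 (x - v) (z - x) := by
        simp only [det2, Prod.fst_sub, Prod.snd_sub]; ring
      rw [e]
      have h2 := hz.2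
      rw [hdet] at h2
      by_contra hc
      push Not at hc
      rcases hc.lt_or_eq with h3 | h3
      · have := ht (Finset.mem_coe.2 (Finset.mem_image_of_mem _ hz.1))
        rw [le_div_iff₀ h3] at this
        linarith
      · by_cases hzx : z = x
        · subst hzx
          simp [det2_zero] at h2
        by_cases hzv : z = v
        · subst hzv
          rw [← h3] at h2
          linarith
        · exact h v hv x hxP z hz.1 (Ne.symm hxv) (Ne.symm hzv) (Ne.symm hzx) (by rw [e, ← h3]))
    (by omega) (by
      rw [hdet]
      have : det2 (x - v) (v - x) = 0 := by simp only [det2, Prod.fst_sub, Prod.snd_sub]; ring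
      rw [this]; linarith)
  exact Finset.mem_image.2 ⟨(y, x), mem_Dv.2 ⟨⟨⟨hy, hxP, hyx⟩, hyl⟩, hyv⟩, rfl⟩

lemma Dv_card_ge {P : Finset (ℝ × ℝ)} (h : GP P) {v : ℝ × ℝ} (hv : IsExt P v) {k : ℕ}
    (hk : 2 * k + 3 ≤ P.card) : k + 1 ≤ (Dv P v k).card := by
  classical
  rw [← F2_card hv h (by omega : k + 2 ≤ P.card)]
  exact (Finset.card_le_card (F2_sub_heads h hv.1 hk)).trans Finset.card_image_le

lemma heads_of_card {P : Finset (ℝ × ℝ)} (h : GP P) {v : ℝ × ℝ} (hv : IsExt P v) {k : ℕ}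
    (hk : 2 * k + 3 ≤ P.card) (hc : (Dv P v k).card = k + 1) :
    ∀ e ∈ Dv P v k, lft P e.2 v ≤ k := by
  classical
  have : F2 P v k = (Dv P v k).image Prod.snd := by
    apply Finset.eq_of_subset_of_card_le (F2_sub_heads h hv.1 hk)
    rw [F2_card hv h (by omega : k + 2 ≤ P.card), ← hc]
    exact Finset.card_image_le
  intro e he
  have h2 : e.2 ∈ F2 P v k := by rw [this]; exact Finset.mem_image_of_mem _ he
  exact (mem_F2.1 h2).2

lemma LtS_rec {P : Finset (ℝ × ℝ)} (h : GP P) {v : ℝ × ℝ} (hv : IsExt P v) {K : ℕ}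
    (hk : 2 * K + 3 ≤ P.card) :
    2 * (K + 1) + (LtS (P.erase v) K).card + (Dv P v K).card ≤ (LtS P (K + 1)).card := by
  classical
  have hle : ∀ p q, lft (P.erase v) p q ≤ lft P p q ∧ lft P p q ≤ lft (P.erase v) p q + 1 := by
    intro p q
    unfold lft
    rw [Finset.filter_erase]
    have := Finset.card_erase_le (s := P.filter (fun z => 0 < det2 (q - p) (z - p))) (a := v)
    have := Finset.pred_card_le_card_erase (s := P.filter (fun z => 0 < det2 (q - p) (z - p))) (a := v)
    omega
  have c1 : ((F1 P v K).image (fun x => (v, x))).card = K + 1 := by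
    rw [Finset.card_image_of_injective _ (fun a b hab => (Prod.mk.inj hab).2),
      F1_card hv h (by omega)]
  have c2 : ((F2 P v K).image (fun x => (x, v))).card = K + 1 := by
    rw [Finset.card_image_of_injective _ (fun a b hab => (Prod.mk.inj hab).1),
      F2_card hv h (by omega)]
  have d1 : Disjoint ((F1 P v K).image (fun x => (v, x))) ((F2 P v K).image (fun x => (x, v))) := by
    rw [Finset.disjoint_left]
    intro e he he'
    obtain ⟨x, hx, rfl⟩ := Finset.mem_image.1 he
    obtain ⟨y, hy, hy'⟩ := Finset.mem_image.1 he'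
    exact (mem_F1.1 hx).1.1 (Prod.mk.inj hy').2.symm
  have d2 : Disjoint (((F1 P v K).image (fun x => (v, x))) ∪ ((F2 P v K).image (fun x => (x, v))))
      (LtS (P.erase v) K) := by
    rw [Finset.disjoint_left]
    intro e he he'
    obtain ⟨⟨h1, h2, -⟩, -⟩ := mem_LtS.1 he'
    rcases Finset.mem_union.1 he with he | he
    · obtain ⟨x, hx, rfl⟩ := Finset.mem_image.1 he
      simp at h1
    · obtain ⟨x, hx, rfl⟩ := Finset.mem_image.1 he
      simp at h2
  have d3 : Disjoint (((F1 P v K).image (fun x => (v, x))) ∪ ((F2 P v K).image (fun x => (x, v)))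
      ∪ (LtS (P.erase v) K)) (Dv P v K) := by
    rw [Finset.disjoint_left]
    intro e he he'
    obtain ⟨⟨⟨h1, h2, h3⟩, h4⟩, h5⟩ := mem_Dv.1 he'
    rcases Finset.mem_union.1 he with he | he
    · rcases Finset.mem_union.1 he with he | he
      · obtain ⟨x, hx, rfl⟩ := Finset.mem_image.1 he
        simp [det2_zero] at h5
      · obtain ⟨x, hx, rfl⟩ := Finset.mem_image.1 he
        simp [det2_self] at h5
    · have h6 := (mem_LtS.1 he).2
      have h7 : lft (P.erase v) e.1 e.2 = lft P e.1 e.2 := by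
        unfold lft
        rw [Finset.filter_erase, Finset.erase_eq_of_notMem]
        intro hc
        have := (Finset.mem_filter.1 hc).2
        linarith
      omega
  have hsub : (((F1 P v K).image (fun x => (v, x))) ∪ ((F2 P v K).image (fun x => (x, v)))
      ∪ (LtS (P.erase v) K)) ∪ (Dv P v K) ⊆ LtS P (K + 1) := by
    intro e he
    rw [mem_LtS]
    rcases Finset.mem_union.1 he with he | he
    · rcases Finset.mem_union.1 he with he | he
      · rcases Finset.mem_union.1 he with he | he
        · obtain ⟨x, hx, rfl⟩ := Finset.mem_image.1 he
          obtain ⟨⟨h1, h2⟩, h3⟩ := mem_F1.1 hx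
          exact ⟨⟨hv.1, h2, Ne.symm h1⟩, Nat.lt_succ_of_le h3⟩
        · obtain ⟨x, hx, rfl⟩ := Finset.mem_image.1 he
          obtain ⟨⟨h1, h2⟩, h3⟩ := mem_F2.1 hx
          exact ⟨⟨h2, hv.1, h1⟩, Nat.lt_succ_of_le h3⟩
      · obtain ⟨⟨h1, h2, h3⟩, h4⟩ := mem_LtS.1 he
        refine ⟨⟨Finset.mem_of_mem_erase h1, Finset.mem_of_mem_erase h2, h3⟩, ?_⟩
        have := (hle e.1 e.2).2
        omega
    · obtain ⟨⟨h1, h4⟩, h5⟩ := mem_Dv.1 he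
      exact ⟨h1, by omega⟩
  have := Finset.card_le_card hsub
  rw [Finset.card_union_of_disjoint d3, Finset.card_union_of_disjoint d2,
    Finset.card_union_of_disjoint d1, c1, c2] at this
  omega

lemma choose_rec (K : ℕ) : Nat.choose (K + 2) 2 = Nat.choose (K + 1) 2 + (K + 1) := by
  rw [Nat.choose_succ_succ (K + 1) 1]; simp; omega

lemma LtS_lower (K : ℕ) : ∀ P : Finset (ℝ × ℝ), GP P → 2 * K + 1 ≤ P.card →
    3 * Nat.choose (K + 1) 2 ≤ (LtS P K).card := by
  induction K with
  | zero => intro P _ _; simp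
  | succ K ih =>
    intro P h hc
    obtain ⟨v, hv⟩ := exists_ext (P := P) (by rw [← Finset.card_pos]; omega)
    have h1 := LtS_rec h hv (K := K) (by omega)
    have h2 := Dv_card_ge h hv (k := K) (by omega)
    have h3 := ih (P.erase v) (gp_erase h v) (by rw [Finset.card_erase_of_mem hv.1]; omega)
    rw [choose_rec]
    omega

lemma Dv_card_eq {P : Finset (ℝ × ℝ)} (h : GP P) {v : ℝ × ℝ} (hv : IsExt P v) {k : ℕ}
    (hk : 2 * k + 3 ≤ P.card) (hE : (LtS P (k + 1)).card = 3 * Nat.choose (k + 2) 2) :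
    (Dv P v k).card = k + 1 := by
  have h1 := LtS_rec h hv hk
  have h2 := Dv_card_ge h hv hk
  have h3 := LtS_lower k (P.erase v) (gp_erase h v) (by rw [Finset.card_erase_of_mem hv.1]; omega)
  rw [choose_rec] at hE
  omega

lemma LtS_succ (P : Finset (ℝ × ℝ)) (K : ℕ) :
    (LtS P (K + 1)).card = (LtS P K).card + (DD P K).card := by
  classical
  rw [← Finset.card_union_of_disjoint]
  · congr 1
    ext e
    rw [Finset.mem_union, mem_LtS, mem_LtS, mem_DD, Nat.lt_succ_iff_lt_or_eq]
    tauto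
  · rw [Finset.disjoint_left]
    intro e he he'
    have h1 := (mem_LtS.1 he).2
    have h2 := (mem_DD.1 he').2
    omega

lemma Ek_eq {P : Finset (ℝ × ℝ)} (h : GP P) {k : ℕ} (hk : 2 * k + 2 < P.card) :
    Ek P k = (DD P k).card := by
  classical
  have hL : ∀ p q, {x ∈ (P : Set (ℝ × ℝ)) | 0 < det2 (q - p) (x - p)}.ncard = lft P p q := by
    intro p q
    unfold lft
    rw [← Set.ncard_coe_finset]
    congr 1
    ext z; simp
  have hR : ∀ p q, {x ∈ (P : Set (ℝ × ℝ)) | det2 (q - p) (x - p) < 0}.ncard = lft P q p := by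
    intro p q
    rw [lft_rev P p q, ← Set.ncard_coe_finset]
    congr 1
    ext z; simp
  have hI : ∀ p q, IsKEdge P k p q ↔ p ≠ q ∧ (lft P p q = k ∨ lft P q p = k) := by
    intro p q
    unfold IsKEdge
    rw [hL, hR]
  have : {e : Sym2 (ℝ × ℝ) | ∃ p ∈ P, ∃ q ∈ P, e = s(p, q) ∧ IsKEdge P k p q} =
      (((DD P k).image (fun e => s(e.1, e.2)) : Finset (Sym2 (ℝ × ℝ))) : Set (Sym2 (ℝ × ℝ))) := by
    ext e
    simp only [Set.mem_ofPred_eq, Finset.coe_image, Set.mem_image, Finset.mem_coe, hI]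
    constructor
    · rintro ⟨p, hp, q, hq, rfl, hpq, h1 | h1⟩
      · exact ⟨(p, q), mem_DD.2 ⟨⟨hp, hq, hpq⟩, h1⟩, rfl⟩
      · exact ⟨(q, p), mem_DD.2 ⟨⟨hq, hp, Ne.symm hpq⟩, h1⟩, Sym2.eq_swap⟩
    · rintro ⟨⟨p, q⟩, he, rfl⟩
      obtain ⟨⟨hp, hq, hpq⟩, h1⟩ := mem_DD.1 he
      exact ⟨p, hp, q, hq, rfl, hpq, Or.inl h1⟩
  unfold Ek
  rw [this, Set.ncard_coe_finset, Finset.card_image_of_injOn]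
  rintro ⟨p, q⟩ h1 ⟨p', q'⟩ h2 h3
  obtain ⟨⟨hp, hq, hpq⟩, h4⟩ := mem_DD.1 (Finset.mem_coe.1 h1)
  obtain ⟨-, h5⟩ := mem_DD.1 (Finset.mem_coe.1 h2)
  simp only [Sym2.eq_iff] at h3 h4 h5 hp hq hpq
  rcases h3 with ⟨rfl, rfl⟩ | ⟨rfl, rfl⟩
  · rfl
  · have := lft_add h hp hq hpq
    omega

lemma EleK_eq {P : Finset (ℝ × ℝ)} (h : GP P) (k : ℕ) (hk : 2 * k + 2 < P.card) :
    EleK P k = (LtS P (k + 1)).card := by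
  induction k with
  | zero =>
    rw [LtS_succ]
    have : LtS P 0 = ∅ := by
      ext e; simp [mem_LtS]
    simp [EleK, this, Ek_eq h hk]
  | succ k ih =>
    rw [LtS_succ, ← ih (by omega), EleK, Finset.sum_range_succ, Ek_eq h hk]
    rfl

lemma perturb_pair (a b c d : ℝ) (h : a < b ∨ (a = b ∧ c < d)) :
    ∀ᶠ ε in nhdsWithin (0 : ℝ) (Set.Ioi 0), a + ε * c < b + ε * d := by
  rcases h with h | ⟨rfl, h⟩
  · have hc : ContinuousAt (fun ε : ℝ => b + ε * d - (a + ε * c)) 0 := by fun_prop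
    have : ∀ᶠ ε in nhds (0 : ℝ), 0 < b + ε * d - (a + ε * c) :=
      hc.eventually (lt_mem_nhds (by simpa using h))
    filter_upwards [this.filter_mono nhdsWithin_le_nhds] with ε hε
    linarith
  · filter_upwards [self_mem_nhdsWithin] with ε hε
    have : 0 < ε := hε
    nlinarith

lemma direction {P : Finset (ℝ × ℝ)} (h : GP P) {v : ℝ × ℝ} (hv : IsExt P v) {k : ℕ}
    (hk : 2 * k + 3 ≤ P.card) (hH : ∀ e ∈ Dv P v k, lft P e.2 v ≤ k) :
    ∃ u : ℝ × ℝ, ∀ y ∈ P, y ∉ F1 P v k → y ∉ F2 P v k →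
      (∀ x ∈ F1 P v k, dot2 u x < dot2 u y) ∧ (∀ z ∈ F2 P v k, dot2 u y < dot2 u z) := by
  classical
  obtain ⟨q, hq, hqv, hql⟩ := F2_bdry hv h (k := k) (by omega)
  have hqF2 : q ∈ F2 P v k := mem_F2.2 ⟨⟨hqv, hq⟩, hql.le⟩
  set f : ℝ × ℝ → ℝ := fun z => - det2 (q - v) (z - v) with hf
  have hfv : f v = 0 := by simp [hf, det2_zero]
  have hfF2 : ∀ z ∈ F2 P v k, z ≠ q → 0 < f z := by
    intro z hz hzq
    obtain ⟨⟨hzv, hzP⟩, hzl⟩ := mem_F2.1 hz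
    have h1 := h v hv.1 q hq z hzP (Ne.symm hqv) (Ne.symm hzv) (Ne.symm hzq)
    have h2 := (ext_order hv h hq hzP hqv hzv).not.2 (by omega)
    simp only [hf]
    have := lt_of_le_of_ne (not_lt.1 h2) h1
    linarith
  have hfq : f q = 0 := by simp [hf, det2_self]
  have hfF2' : ∀ z ∈ F2 P v k, 0 ≤ f z := by
    intro z hz
    by_cases hzq : z = q
    · rw [hzq, hfq]
    · exact (hfF2 z hz hzq).le
  have hneg : ∀ z ∈ P, z ≠ v → z ∉ F2 P v k → f z < 0 := by
    intro z hz hzv hzF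
    have h1 : ¬ lft P z v ≤ k := fun hc => hzF (mem_F2.2 ⟨⟨hzv, hz⟩, hc⟩)
    have h2 := (ext_order hv h hq hz hqv hzv).2 (by omega)
    simp only [hf]; linarith
  let R := P.filter (fun y => y ∉ F1 P v k ∧ y ∉ F2 P v k)
  have hvR : v ∈ R := Finset.mem_filter.2 ⟨hv.1, fun hc => (mem_F1.1 hc).1.1 rfl,
    fun hc => (mem_F2.1 hc).1.1 rfl⟩
  have hcount : ∀ x ∈ R, k + 1 ≤ (P.filter (fun z => f z < f x)).card := by
    intro x hx
    obtain ⟨hxP, hx1, hx2⟩ := Finset.mem_filter.1 hx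
    by_cases hxv : x = v
    · subst hxv
      have h1 := lft_add h hv.1 hq (Ne.symm hqv)
      have h2 : lft P x q = (P.filter (fun z => f z < f x)).card := by
        unfold lft
        congr 1
        apply Finset.filter_congr
        intro z _
        rw [hfv]
        simp only [hf]
        constructor <;> intro <;> linarith
      omega
    · by_contra hc
      have he : (P.filter (fun z => 0 < det2 (q - v) (z - x))) = P.filter (fun z => f z < f x) := by
        apply Finset.filter_congr
        intro z _
        have : det2 (q - v) (z - x) = f x - f z := by
          simp only [hf, det2, Prod.fst_sub, Prod.snd_sub]; ring
        rw [this, sub_pos]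
      have hxl : ¬ lft P v x ≤ k := fun hc => hx1 (mem_F1.2 ⟨⟨hxv, hxP⟩, hc⟩)
      obtain ⟨y, hy, hyx, -, -, hyl, hyv⟩ := rot (k := k) (v := v) (w := q - v) h hxP
        (by rw [he]; omega) (by omega) (by
          have := hneg x hxP hxv hx2
          have e : det2 (q - v) (v - x) = f x := by
            simp only [hf, det2, Prod.fst_sub, Prod.snd_sub]; ring
          rw [e]; exact this)
      have := hH (y, x) (mem_Dv.2 ⟨⟨⟨hy, hxP, hyx⟩, hyl⟩, hyv⟩)
      exact hx2 (mem_F2.2 ⟨⟨hxv, hxP⟩, this⟩)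
  obtain ⟨x₀, hx₀, hmin⟩ := Finset.exists_min_image R f ⟨v, hvR⟩
  have hsub : P.filter (fun z => f z < f x₀) ⊆ F1 P v k := by
    intro z hz
    obtain ⟨hzP, hzl⟩ := Finset.mem_filter.1 hz
    by_contra hc
    by_cases hz2 : z ∈ F2 P v k
    · have := hfF2' z hz2
      have := hmin v hvR
      linarith
    · have := hmin z (Finset.mem_filter.2 ⟨hzP, hc, hz2⟩)
      linarith
  have heq := Finset.eq_of_subset_of_card_le hsub (by
    rw [F1_card hv h (by omega)]; exact hcount x₀ hx₀)
  have hlt1 : ∀ x ∈ F1 P v k, ∀ y ∈ R, f x < f y := by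
    intro x hx y hy
    rw [← heq] at hx
    exact lt_of_lt_of_le (Finset.mem_filter.1 hx).2 (hmin y hy)
  set g : ℝ × ℝ → ℝ := fun z => dot2 (q - v) z with hg
  have hgq : g v < g q := by
    simp only [hg, dot2, Prod.fst_sub, Prod.snd_sub]
    by_contra hc
    apply hqv
    have h4 : q.1 - v.1 = 0 := by nlinarith [sq_nonneg (q.1 - v.1), sq_nonneg (q.2 - v.2)]
    have h5 : q.2 - v.2 = 0 := by nlinarith [sq_nonneg (q.1 - v.1), sq_nonneg (q.2 - v.2)]
    ext <;> linarith
  have hlt2 : ∀ y ∈ R, ∀ z ∈ F2 P v k, f y < f z ∨ (f y = f z ∧ g y < g z) := by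
    intro y hy z hz
    obtain ⟨hyP, hy1, hy2⟩ := Finset.mem_filter.1 hy
    by_cases hyv : y = v
    · subst hyv
      by_cases hzq : z = q
      · subst hzq
        exact Or.inr ⟨by rw [hfv, hfq], hgq⟩
      · left
        rw [hfv]; exact hfF2 z hz hzq
    · left
      exact lt_of_lt_of_le (hneg y hyP hyv hy2) (hfF2' z hz)
  have ev1 : ∀ᶠ ε in nhdsWithin (0 : ℝ) (Set.Ioi 0), ∀ y ∈ R, ∀ x ∈ F1 P v k,
      f x + ε * g x < f y + ε * g y := by
    rw [Filter.eventually_all_finset]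
    intro y hy
    rw [Filter.eventually_all_finset]
    intro x hx
    exact perturb_pair _ _ _ _ (Or.inl (hlt1 x hx y hy))
  have ev2 : ∀ᶠ ε in nhdsWithin (0 : ℝ) (Set.Ioi 0), ∀ y ∈ R, ∀ z ∈ F2 P v k,
      f y + ε * g y < f z + ε * g z := by
    rw [Filter.eventually_all_finset]
    intro y hy
    rw [Filter.eventually_all_finset]
    intro z hz
    exact perturb_pair _ _ _ _ (hlt2 y hy z hz)
  obtain ⟨ε, hε1, hε2⟩ := (ev1.and ev2).exists
  have hdot : ∀ z, dot2 ((q - v).2 + ε * (q - v).1, -(q - v).1 + ε * (q - v).2) z =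
      f z + ε * g z - det2 (q - v) v := by
    intro z
    simp only [hf, hg, dot2, det2, Prod.fst_sub, Prod.snd_sub]; ring
  refine ⟨((q - v).2 + ε * (q - v).1, -(q - v).1 + ε * (q - v).2), ?_⟩
  intro y hy hy1 hy2
  have hyR : y ∈ R := Finset.mem_filter.2 ⟨hy, hy1, hy2⟩
  refine ⟨fun x hx => ?_, fun z hz => ?_⟩
  · rw [hdot, hdot]
    linarith [hε1 y hyR x hx]
  · rw [hdot, hdot]
    linarith [hε2 y hyR z hz]

/-- `a, b, c` is the (clockwise) triangular convex hull of `P`. -/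
def Tri (P : Finset (ℝ × ℝ)) (a b c : ℝ × ℝ) : Prop :=
  a ∈ P ∧ b ∈ P ∧ c ∈ P ∧ a ≠ b ∧ b ≠ c ∧ c ≠ a ∧
  (∀ z ∈ P, z ≠ a → z ≠ b → det2 (b - a) (z - a) < 0) ∧
  (∀ z ∈ P, z ≠ b → z ≠ c → det2 (c - b) (z - b) < 0) ∧
  (∀ z ∈ P, z ≠ c → z ≠ a → det2 (a - c) (z - c) < 0)

lemma Tri.rot {P : Finset (ℝ × ℝ)} {a b c : ℝ × ℝ} (h : Tri P a b c) : Tri P b c a := by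
  obtain ⟨h1, h2, h3, h4, h5, h6, h7, h8, h9⟩ := h
  exact ⟨h2, h3, h1, h5, h6, h4, h8, h9, h7⟩

lemma Tri.ext {P : Finset (ℝ × ℝ)} {a b c : ℝ × ℝ} (h : Tri P a b c) : IsExt P a := by
  obtain ⟨h1, h2, h3, h4, h5, h6, h7, h8, h9⟩ := h
  refine ⟨h1, -(b - a) - (a - c), ?_⟩
  intro z hz hza
  have e : det2 (-(b - a) - (a - c)) (z - a) = - det2 (b - a) (z - a) - det2 (a - c) (z - c) := by
    simp only [det2, Prod.fst_sub, Prod.snd_sub, Prod.fst_neg, Prod.snd_neg]; ring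
  rw [e]
  by_cases hzb : z = b
  · subst hzb
    have := h9 z hz h5 hza
    rw [det2_self]; linarith
  · by_cases hzc : z = c
    · subst hzc
      have := h7 z hz hza hzb
      rw [sub_self, det2_zero]; linarith
    · have := h7 z hz hza hzb
      have := h9 z hz hzc hza
      linarith

/-- a closed left half-plane containing `a, b, c` contains `P` -/
lemma Tri.right {P : Finset (ℝ × ℝ)} {a b c : ℝ × ℝ} (h : Tri P a b c) (p d : ℝ × ℝ)
    (ha : 0 ≤ det2 d (a - p)) (hb : 0 ≤ det2 d (b - p)) (hc : 0 ≤ det2 d (c - p)) :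
    ∀ z ∈ P, 0 ≤ det2 d (z - p) := by
  obtain ⟨h1, h2, h3, h4, h5, h6, h7, h8, h9⟩ := h
  intro z hz
  by_cases hza : z = a
  · rw [hza]; exact ha
  by_cases hzb : z = b
  · rw [hzb]; exact hb
  by_cases hzc : z = c
  · rw [hzc]; exact hc
  have k1 := h7 z hz hza hzb
  have k2 := h8 z hz hzb hzc
  have k3 := h9 z hz hzc hza
  have e : (- det2 (b - a) (z - a) - det2 (c - b) (z - b) - det2 (a - c) (z - c)) * det2 d (z - p) =
    (- det2 (b - a) (z - a)) * det2 d (c - p) + (- det2 (c - b) (z - b)) * det2 d (a - p)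
      + (- det2 (a - c) (z - c)) * det2 d (b - p) := by
    simp only [det2, Prod.fst_sub, Prod.snd_sub]; ring
  have m1 := mul_nonneg (by linarith : 0 ≤ - det2 (b - a) (z - a)) hc
  have m2 := mul_nonneg (by linarith : 0 ≤ - det2 (c - b) (z - b)) ha
  have m3 := mul_nonneg (by linarith : 0 ≤ - det2 (a - c) (z - c)) hb
  by_contra hn
  push Not at hn
  nlinarith

lemma lft_zero {P : Finset (ℝ × ℝ)} (h : GP P) {p q : ℝ × ℝ} (hp : p ∈ P) (hq : q ∈ P)
    (hpq : p ≠ q) (h0 : lft P p q = 0) :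
    ∀ z ∈ P, z ≠ p → z ≠ q → det2 (q - p) (z - p) < 0 := by
  classical
  intro z hz hzp hzq
  unfold lft at h0
  rw [Finset.card_eq_zero, Finset.filter_eq_empty_iff] at h0
  exact lt_of_le_of_ne (not_lt.1 (h0 hz)) (h p hp q hq z hz hpq (Ne.symm hzp) (Ne.symm hzq))

lemma exists_tri {P : Finset (ℝ × ℝ)} (h : GP P) (hc : 3 ≤ P.card) (h0 : (DD P 0).card = 3) :
    ∃ a b c, Tri P a b c := by
  classical
  obtain ⟨a, ha⟩ := exists_ext (P := P) (by rw [← Finset.card_pos]; omega)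
  obtain ⟨b, hb⟩ : (F1 P a 0).Nonempty := by
    rw [← Finset.card_pos, F1_card ha h (by omega)]; omega
  obtain ⟨c, hcF⟩ : (F2 P a 0).Nonempty := by
    rw [← Finset.card_pos, F2_card ha h (by omega)]; omega
  obtain ⟨z, hz⟩ := Finset.mem_image.1 (F2_sub_heads h ha.1 (by omega) hcF)
  obtain ⟨hzD, hz2⟩ := hz
  obtain ⟨z, c'⟩ := z
  simp only at hz2
  subst hz2
  obtain ⟨⟨⟨hzP, hcP, hzc⟩, hzl⟩, hza⟩ := mem_Dv.1 hzD
  obtain ⟨⟨hba, hbP⟩, hbl⟩ := mem_F1.1 hb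
  obtain ⟨⟨hca, -⟩, hcl⟩ := mem_F2.1 hcF
  simp only at hzP hcP hzc hzl hza
  have hza' : z ≠ a := by
    rintro rfl
    simp [det2_zero] at hza
  have hab := lft_add h ha.1 hbP (Ne.symm hba)
  have hbc : b ≠ c' := by
    rintro rfl
    omega
  have hbl0 : lft P a b = 0 := by omega
  have hcl0 : lft P c' a = 0 := by omega
  have hA := lft_zero h ha.1 hbP (Ne.symm hba) hbl0
  have hC := lft_zero h hcP ha.1 hca hcl0
  have hDeq : ({(a, b), (c', a), (z, c')} : Finset ((ℝ × ℝ) × (ℝ × ℝ))) = DD P 0 := by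
    apply Finset.eq_of_subset_of_card_le
    · intro e he
      simp only [Finset.mem_insert, Finset.mem_singleton] at he
      rcases he with rfl | rfl | rfl
      · exact mem_DD.2 ⟨⟨ha.1, hbP, Ne.symm hba⟩, hbl0⟩
      · exact mem_DD.2 ⟨⟨hcP, ha.1, hca⟩, hcl0⟩
      · exact mem_DD.2 ⟨⟨hzP, hcP, hzc⟩, hzl⟩
    · rw [h0, Finset.card_eq_three.2 ⟨_, _, _, ?_, ?_, ?_, rfl⟩]
      · intro hc; exact hca (Prod.mk.inj hc).1.symm
      · intro hc; exact hza' (Prod.mk.inj hc).1.symm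
      · intro hc; exact hzc (Prod.mk.inj hc).1.symm
  have hbE : IsExt P b := by
    refine ⟨hbP, ?_⟩
    let g : ℝ × ℝ := (-(b - a).2, (b - a).1)
    have hg : 0 < det2 g (a - b) := by
      simp only [g, det2, Prod.fst_sub, Prod.snd_sub]
      by_contra hc
      apply hba
      have h4 : b.1 - a.1 = 0 := by nlinarith [sq_nonneg (b.1 - a.1), sq_nonneg (b.2 - a.2)]
      have h5 : b.2 - a.2 = 0 := by nlinarith [sq_nonneg (b.1 - a.1), sq_nonneg (b.2 - a.2)]
      ext <;> linarith
    have ev : ∀ᶠ ε in nhdsWithin (0 : ℝ) (Set.Ioi 0), ∀ z ∈ P.erase b,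
        0 + ε * 0 < - det2 (b - a) (z - a) + ε * det2 g (z - b) := by
      rw [Filter.eventually_all_finset]
      intro z hz
      apply perturb_pair
      obtain ⟨hzb, hzP⟩ := Finset.mem_erase.1 hz
      by_cases hza : z = a
      · subst hza
        right
        exact ⟨by rw [sub_self, det2_zero, neg_zero], hg⟩
      · left
        linarith [hA z hzP hza hzb]
    obtain ⟨ε, hε⟩ := ev.exists
    refine ⟨-(b - a) + ε • g, ?_⟩
    intro z hz hzb
    have := hε z (Finset.mem_erase.2 ⟨hzb, hz⟩)
    have e : det2 (-(b - a) + ε • g) (z - b) = - det2 (b - a) (z - a) + ε * det2 g (z - b) := by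
      simp only [det2, Prod.fst_sub, Prod.snd_sub, Prod.fst_neg, Prod.snd_neg, Prod.fst_add,
        Prod.snd_add, Prod.smul_fst, Prod.smul_snd, smul_eq_mul]; ring
    rw [e]; linarith
  obtain ⟨y, hy⟩ : (F1 P b 0).Nonempty := by
    rw [← Finset.card_pos, F1_card hbE h (by omega)]; omega
  obtain ⟨⟨hyb, hyP⟩, hyl⟩ := mem_F1.1 hy
  have hmem : (b, y) ∈ DD P 0 := mem_DD.2 ⟨⟨hbP, hyP, Ne.symm hyb⟩, by simp only; omega⟩
  rw [← hDeq] at hmem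
  simp only [Finset.mem_insert, Finset.mem_singleton, Prod.mk.injEq] at hmem
  rcases hmem with ⟨h1, -⟩ | ⟨h1, -⟩ | ⟨h1, -⟩
  · exact absurd h1 hba
  · exact absurd h1 hbc
  · subst h1
    exact ⟨a, b, c', ha.1, hbP, hcP, Ne.symm hba, hbc, hca, hA,
      lft_zero h hbP hcP hbc hzl, hC⟩

lemma consist {P : Finset (ℝ × ℝ)} (h : GP P) {a b c : ℝ × ℝ} (ht : Tri P a b c) {k : ℕ}
    (hk : 2 * k + 3 ≤ P.card)
    (hU : ∀ e ∈ DD P k, ¬ (det2 (e.2 - e.1) (a - e.1) < 0 ∧ det2 (e.2 - e.1) (b - e.1) < 0)) :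
    F2 P a k = F1 P b k := by
  classical
  have haE := ht.ext
  have hbE := ht.rot.ext
  obtain ⟨haP, hbP, hcP, hab, hbc, hca, h7, h8, h9⟩ := ht
  apply Finset.eq_of_subset_of_card_le
  swap
  · rw [F1_card hbE h (by omega), F2_card haE h (by omega)]
  obtain ⟨q, hq, hqa, hql⟩ := F2_bdry haE h (k := k) (by omega)
  have hbl : ¬ lft P b a ≤ k := by
    have h1 := lft_add h haP hbP hab
    have h2 : lft P a b = 0 := by
      unfold lft
      rw [Finset.card_eq_zero, Finset.filter_eq_empty_iff]
      intro z hz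
      by_cases hza : z = a
      · rw [hza, sub_self, det2_zero]; exact lt_irrefl _
      by_cases hzb : z = b
      · rw [hzb, det2_self]; exact lt_irrefl _
      · linarith [h7 z hz hza hzb]
    omega
  have hqb : q ≠ b := by
    rintro rfl; omega
  have hbq : det2 (a - q) (b - q) < 0 := by
    have := h7 q hq hqa hqb
    have e : det2 (a - q) (b - q) = det2 (b - a) (q - a) := by
      simp only [det2, Prod.fst_sub, Prod.snd_sub]; ring
    rwa [e]
  intro x hx
  obtain ⟨⟨hxa, hxP⟩, hxl⟩ := mem_F2.1 hx
  have hxb : x ≠ b := by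
    rintro rfl; omega
  refine mem_F1.2 ⟨⟨hxb, hxP⟩, ?_⟩
  by_contra hcon
  have hxq : 0 ≤ det2 (a - q) (x - q) := by
    have h2 := (ext_order haE h hq hxP hqa hxa).not.2 (by omega)
    have e : det2 (a - q) (x - q) = - det2 (q - a) (x - a) := by
      simp only [det2, Prod.fst_sub, Prod.snd_sub]; ring
    rw [e]; linarith
  have hwb : det2 (a - q) (b - x) < 0 := by
    have e : det2 (a - q) (b - x) = det2 (a - q) (b - q) - det2 (a - q) (x - q) := by
      simp only [det2, Prod.fst_sub, Prod.snd_sub]; ring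
    linarith
  obtain ⟨y, hy, hyx, hyβ, hyα, hyl, hyb⟩ := rot (k := k) (v := b) (w := a - q) h hxP (by
    rw [← hql]
    unfold lft
    apply Finset.card_le_card
    intro z hz
    rw [Finset.mem_filter] at hz ⊢
    refine ⟨hz.1, ?_⟩
    have e : det2 (a - q) (z - q) = det2 (a - q) (z - x) + det2 (a - q) (x - q) := by
      simp only [det2, Prod.fst_sub, Prod.snd_sub]; ring
    linarith [hz.2]) (by omega) hwb
  apply hU (y, x) (mem_DD.2 ⟨⟨hy, hxP, hyx⟩, hyl⟩)
  refine ⟨?_, hyb⟩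
  simp only
  have hbax := h7 x hxP hxa hxb
  have hya : y ≠ a := by
    rintro rfl
    have e : det2 (x - b) (y - x) = det2 (b - y) (x - y) := by
      simp only [det2, Prod.fst_sub, Prod.snd_sub]; ring
    linarith
  have hne := h y hy x hxP a haP hyx hya hxa
  refine lt_of_le_of_ne ?_ hne
  have e : det2 (x - y) (a - y) * (- det2 (a - q) (b - x)) =
      (- det2 (b - a) (x - a)) * det2 (a - q) (y - x) +
      (- det2 (a - q) (x - q)) * det2 (x - b) (y - x) := by
    simp only [det2, Prod.fst_sub, Prod.snd_sub]; ring
  have m1 := mul_nonneg (by linarith : 0 ≤ - det2 (b - a) (x - a))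
    (by linarith : 0 ≤ - det2 (a - q) (y - x))
  have m2 := mul_nonneg hxq hyβ.le
  by_contra hn
  push Not at hn
  have := mul_pos hn (by linarith : 0 < - det2 (a - q) (b - x))
  nlinarith

lemma nonpar {u₁ u₂ a b c : ℝ × ℝ} (h1 : dot2 u₁ b < dot2 u₁ a ∧ dot2 u₁ a < dot2 u₁ c)
    (h2 : dot2 u₂ c < dot2 u₂ b ∧ dot2 u₂ b < dot2 u₂ a) : det2 u₁ u₂ ≠ 0 := by
  intro h0
  have e : (dot2 u₁ a - dot2 u₁ b) * (dot2 u₂ b - dot2 u₂ c) -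
      (dot2 u₁ b - dot2 u₁ c) * (dot2 u₂ a - dot2 u₂ b) =
      det2 u₁ u₂ * det2 (a - b) (b - c) := by
    simp only [det2, dot2, Prod.fst_sub, Prod.snd_sub]; ring
  rw [h0, zero_mul] at e
  have m1 := mul_pos (sub_pos.2 h1.1) (sub_pos.2 h2.1)
  have m2 := mul_pos (by linarith : 0 < dot2 u₁ c - dot2 u₁ b) (sub_pos.2 h2.2)
  nlinarith

lemma projBetween_smul {u : ℝ × ℝ} {X Y Z : Finset (ℝ × ℝ)} {s : ℝ} (hs : s ≠ 0)
    (h : ∀ x ∈ X, ∀ y ∈ Y, ∀ z ∈ Z, dot2 u y < dot2 u x ∧ dot2 u x < dot2 u z) :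
    ProjBetween (s • u) X Y Z := by
  have e : ∀ z, dot2 (s • u) z = s * dot2 u z := by
    intro z; simp only [dot2, Prod.smul_fst, Prod.smul_snd, smul_eq_mul]; ring
  rcases lt_or_gt_of_ne hs with hs | hs
  · right
    intro x hx y hy z hz
    rw [e, e, e]
    have := h x hx y hy z hz
    exact ⟨mul_lt_mul_of_neg_left this.2 hs, mul_lt_mul_of_neg_left this.1 hs⟩
  · left
    intro x hx y hy z hz
    rw [e, e, e]
    have := h x hx y hy z hz
    exact ⟨mul_lt_mul_of_pos_left this.1 hs, mul_lt_mul_of_pos_left this.2 hs⟩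

lemma enclose (P : Finset (ℝ × ℝ)) (e₁ e₂ e₃ : ℝ × ℝ) (hs : e₁ + e₂ + e₃ = 0)
    (hd : det2 e₁ e₂ ≠ 0) : ∃ R : ℝ, 0 < R ∧ ∃ v₁ v₂ v₃ : ℝ × ℝ,
      v₂ - v₁ = R • e₁ ∧ v₃ - v₂ = R • e₂ ∧ v₁ - v₃ = R • e₃ ∧
      ¬ Collinear ℝ ({v₁, v₂, v₃} : Set (ℝ × ℝ)) ∧
      (P : Set (ℝ × ℝ)) ⊆ convexHull ℝ {v₁, v₂, v₃} := by
  have he : e₃ = -e₁ - e₂ := by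
    have := eq_neg_of_add_eq_zero_right hs
    rw [this]; abel
  subst he
  set Δ := det2 e₁ e₂ with hΔ
  obtain ⟨R₀, hR₀⟩ := (P.image (fun z => |det2 e₁ z / Δ| + |det2 e₂ z / Δ|)).exists_le
  let R := 3 * max R₀ 1
  have hR : 0 < R := by positivity
  have hR3 : R₀ ≤ R / 3 := by
    have : R / 3 = max R₀ 1 := by simp only [R]; ring
    rw [this]; exact le_max_left _ _
  refine ⟨R, hR, (R / 3) • (-e₁ - e₂ - e₁), (R / 3) • (e₁ - e₂), (R / 3) • (e₂ - (-e₁ - e₂)),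
    ?_, ?_, ?_, ?_, ?_⟩
  · ext <;> simp <;> ring
  · ext <;> simp <;> ring
  · ext <;> simp <;> ring
  · intro hcol
    rw [collinear_iff_of_mem (p₀ := (R / 3) • (-e₁ - e₂ - e₁)) (by simp)] at hcol
    obtain ⟨d, hdd⟩ := hcol
    obtain ⟨r, hr⟩ := hdd ((R / 3) • (e₁ - e₂)) (by simp)
    obtain ⟨r', hr'⟩ := hdd ((R / 3) • (e₂ - (-e₁ - e₂))) (by simp)
    have q1 : R • e₁ = r • d := by
      have : R • e₁ = (R / 3) • (e₁ - e₂) - (R / 3) • (-e₁ - e₂ - e₁) := by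
        ext <;> simp <;> ring
      rw [this, hr, vadd_eq_add, add_sub_cancel_right]
    have q2 : R • (e₁ + e₂) = r' • d := by
      have : R • (e₁ + e₂) = (R / 3) • (e₂ - (-e₁ - e₂)) - (R / 3) • (-e₁ - e₂ - e₁) := by
        ext <;> simp <;> ring
      rw [this, hr', vadd_eq_add, add_sub_cancel_right]
    have q3 : det2 (R • e₁) (R • (e₁ + e₂)) = R * R * Δ := by
      simp only [hΔ, det2, Prod.smul_fst, Prod.smul_snd, smul_eq_mul, Prod.fst_add, Prod.snd_add]
      ring
    rw [q1, q2] at q3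
    have q4 : det2 (r • d) (r' • d) = 0 := by
      simp only [det2, Prod.smul_fst, Prod.smul_snd, smul_eq_mul]; ring
    rw [q4] at q3
    exact mul_ne_zero (mul_ne_zero hR.ne' hR.ne') hd q3.symm
  · intro z hz
    have hb := hR₀ _ (Finset.mem_image_of_mem _ (Finset.mem_coe.1 hz))
    set p := det2 e₁ z / Δ with hp
    set q := det2 e₂ z / Δ with hq
    have b1 := neg_abs_le p
    have b2 := neg_abs_le q
    have b3 := le_abs_self p
    have b4 := le_abs_self q
    have b5 := abs_nonneg p
    have b6 := abs_nonneg q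
    have hp' : e₁.1 * z.2 - e₁.2 * z.1 = p * (e₁.1 * e₂.2 - e₁.2 * e₂.1) := by
      have : p * Δ = det2 e₁ z := by rw [hp]; field_simp
      simpa only [hΔ, det2] using this.symm
    have hq' : e₂.1 * z.2 - e₂.2 * z.1 = q * (e₁.1 * e₂.2 - e₁.2 * e₂.1) := by
      have : q * Δ = det2 e₂ z := by rw [hq]; field_simp
      simpa only [hΔ, det2] using this.symm
    have hz1 : z = p • e₂ - q • e₁ := by
      have hd' : e₁.1 * e₂.2 - e₁.2 * e₂.1 ≠ 0 := hd
      ext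
      · simp only [Prod.fst_sub, Prod.smul_fst, smul_eq_mul]
        apply mul_left_cancel₀ hd'
        linear_combination e₂.1 * hp' - e₁.1 * hq'
      · simp only [Prod.snd_sub, Prod.smul_snd, smul_eq_mul]
        apply mul_left_cancel₀ hd'
        linear_combination e₂.2 * hp' - e₁.2 * hq'
    have hconv := convex_convexHull ℝ ({(R / 3) • (-e₁ - e₂ - e₁), (R / 3) • (e₁ - e₂),
      (R / 3) • (e₂ - (-e₁ - e₂))} : Set (ℝ × ℝ))
    have hsub := subset_convexHull ℝ ({(R / 3) • (-e₁ - e₂ - e₁), (R / 3) • (e₁ - e₂),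
      (R / 3) • (e₂ - (-e₁ - e₂))} : Set (ℝ × ℝ))
    have key := hconv.sum_mem (t := Finset.univ) (w := ![1 / 3 + q / R, 1 / 3 + (-p - q) / R,
      1 / 3 + p / R]) (z := ![(R / 3) • (-e₁ - e₂ - e₁), (R / 3) • (e₁ - e₂),
      (R / 3) • (e₂ - (-e₁ - e₂))]) (by
        have f1 : ∀ s, - (R / 3) ≤ s → 0 ≤ 1 / 3 + s / R := by
          intro s hs
          have : 1 / 3 + s / R = (R / 3 + s) / R := by field_simp
          rw [this]
          exact div_nonneg (by linarith) hR.le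
        intro i _
        fin_cases i
        · exact f1 q (by linarith)
        · exact f1 (-p - q) (by linarith)
        · exact f1 p (by linarith)) (by
        rw [Fin.sum_univ_three]
        simp
        field_simp
        ring) (by
        intro i _
        fin_cases i <;> apply hsub <;> simp)
    rw [Fin.sum_univ_three] at key
    convert key using 1
    rw [hz1]
    ext
    · simp
      field_simp
      ring
    · simp
      field_simp
      ring

lemma final {P A B C : Finset (ℝ × ℝ)} {u₁ u₂ u₃ : ℝ × ℝ} {k : ℕ}
    (hcard : P.card = 3 * (k + 1)) (sA : A ⊆ P) (sB : B ⊆ P) (sC : C ⊆ P)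
    (kA : A.card = k + 1) (kB : B.card = k + 1) (kC : C.card = k + 1)
    (dBC : Disjoint B C) (dCA : Disjoint C A) (dAB : Disjoint A B)
    (hu₁ : ∀ y ∈ P, y ∉ B → y ∉ C →
      (∀ x ∈ B, dot2 u₁ x < dot2 u₁ y) ∧ (∀ z ∈ C, dot2 u₁ y < dot2 u₁ z))
    (hu₂ : ∀ y ∈ P, y ∉ C → y ∉ A →
      (∀ x ∈ C, dot2 u₂ x < dot2 u₂ y) ∧ (∀ z ∈ A, dot2 u₂ y < dot2 u₂ z))
    (hu₃ : ∀ y ∈ P, y ∉ A → y ∉ B →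
      (∀ x ∈ A, dot2 u₃ x < dot2 u₃ y) ∧ (∀ z ∈ B, dot2 u₃ y < dot2 u₃ z)) :
    PtSet3Decomposable P := by
  classical
  have hU : A ∪ B ∪ C = P := by
    apply Finset.eq_of_subset_of_card_le
    · exact Finset.union_subset (Finset.union_subset sA sB) sC
    · rw [Finset.card_union_of_disjoint (Finset.disjoint_union_left.2 ⟨dCA.symm, dBC⟩),
        Finset.card_union_of_disjoint dAB]
      omega
  have H1 : ∀ x ∈ A, ∀ y ∈ B, ∀ z ∈ C, dot2 u₁ y < dot2 u₁ x ∧ dot2 u₁ x < dot2 u₁ z := by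
    intro x hx y hy z hz
    have := hu₁ x (sA hx) (Finset.disjoint_left.1 dAB hx) (Finset.disjoint_right.1 dCA hx)
    exact ⟨this.1 y hy, this.2 z hz⟩
  have H2 : ∀ x ∈ B, ∀ y ∈ C, ∀ z ∈ A, dot2 u₂ y < dot2 u₂ x ∧ dot2 u₂ x < dot2 u₂ z := by
    intro x hx y hy z hz
    have := hu₂ x (sB hx) (Finset.disjoint_left.1 dBC hx) (Finset.disjoint_right.1 dAB hx)
    exact ⟨this.1 y hy, this.2 z hz⟩
  have H3 : ∀ x ∈ C, ∀ y ∈ A, ∀ z ∈ B, dot2 u₃ y < dot2 u₃ x ∧ dot2 u₃ x < dot2 u₃ z := by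
    intro x hx y hy z hz
    have := hu₃ x (sC hx) (Finset.disjoint_left.1 dCA hx) (Finset.disjoint_right.1 dBC hx)
    exact ⟨this.1 y hy, this.2 z hz⟩
  obtain ⟨a, ha⟩ := Finset.card_pos.1 (by omega : 0 < A.card)
  obtain ⟨b, hb⟩ := Finset.card_pos.1 (by omega : 0 < B.card)
  obtain ⟨c, hc⟩ := Finset.card_pos.1 (by omega : 0 < C.card)
  have n3 : det2 u₁ u₂ ≠ 0 := nonpar (H1 a ha b hb c hc) (H2 b hb c hc a ha)
  have n1 : det2 u₂ u₃ ≠ 0 := nonpar (H2 b hb c hc a ha) (H3 c hc a ha b hb)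
  have n2 : det2 u₃ u₁ ≠ 0 := nonpar (H3 c hc a ha b hb) (H1 a ha b hb c hc)
  obtain ⟨R, hR, v₁, v₂, v₃, w1, w2, w3, hcol, hsub⟩ := enclose P (det2 u₂ u₃ • u₁)
    (det2 u₃ u₁ • u₂) (det2 u₁ u₂ • u₃)
    (by ext <;> simp [det2] <;> ring)
    (by
      have : det2 (det2 u₂ u₃ • u₁) (det2 u₃ u₁ • u₂) =
          det2 u₂ u₃ * det2 u₃ u₁ * det2 u₁ u₂ := by
        generalize det2 u₂ u₃ = s
        generalize det2 u₃ u₁ = t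
        simp only [det2, Prod.smul_fst, Prod.smul_snd, smul_eq_mul]; ring
      rw [this]
      exact mul_ne_zero (mul_ne_zero n1 n2) n3)
  refine ⟨A, B, C, v₁, v₂, v₃, hU, dAB, dCA.symm, dBC, by omega, by omega, hcol, hsub, ?_, ?_, ?_⟩
  · rw [w1, smul_smul]
    exact projBetween_smul (mul_ne_zero hR.ne' n1) H1
  · rw [w2, smul_smul]
    exact projBetween_smul (mul_ne_zero hR.ne' n2) H2
  · rw [w3, smul_smul]
    exact projBetween_smul (mul_ne_zero hR.ne' n3) H3

lemma main_aux {P : Finset (ℝ × ℝ)} (h : GP P) (k : ℕ) (hcard : P.card = 3 * (k + 1))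
    (hE : ∀ j, j ≤ k → (LtS P (j + 1)).card = 3 * Nat.choose (j + 2) 2) :
    PtSet3Decomposable P := by
  classical
  have hk : 2 * k + 3 ≤ P.card := by omega
  have hLt0 : (LtS P 0).card = 0 := by
    rw [Finset.card_eq_zero]; ext e; simp [mem_LtS]
  have hD0 : (DD P 0).card = 3 := by
    have h1 := LtS_succ P 0
    have h2 := hE 0 (Nat.zero_le _)
    simp at h2
    rw [hLt0] at h1
    simp at h1
    omega
  have hDk : (DD P k).card = 3 * (k + 1) := by
    have h1 := LtS_succ P k
    have h2 := hE k le_rfl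
    have h3 : (LtS P k).card = 3 * Nat.choose (k + 1) 2 := by
      rcases Nat.eq_zero_or_pos k with h0 | h0
      · subst h0; rw [hLt0]; rfl
      · have := hE (k - 1) (by omega)
        rwa [show k - 1 + 1 = k by omega, show k - 1 + 2 = k + 1 by omega] at this
    rw [choose_rec] at h2
    omega
  obtain ⟨a, b, c, ht⟩ := exists_tri h (by omega) hD0
  have haE := ht.ext
  have hbE := ht.rot.ext
  have hcE := ht.rot.rot.ext
  have ca := Dv_card_eq h haE hk (hE k le_rfl)
  have cb := Dv_card_eq h hbE hk (hE k le_rfl)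
  have cc := Dv_card_eq h hcE hk (hE k le_rfl)
  have hcover : DD P k ⊆ Dv P a k ∪ (Dv P b k ∪ Dv P c k) := by
    intro e he
    obtain ⟨⟨h1, h2, h3⟩, h4⟩ := mem_DD.1 he
    by_contra hc
    simp only [Finset.mem_union, not_or, mem_Dv, h1, h2, h3, h4, ne_eq, not_false_eq_true,
      and_self, true_and, not_lt] at hc
    have h5 := ht.right e.1 (e.2 - e.1) hc.1 hc.2.1 hc.2.2
    have h6 := lft_add h h1 h2 h3
    rw [lft_rev P e.1 e.2, Finset.filter_false_of_mem, Finset.card_empty] at h6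
    · omega
    · intro z hz; exact not_lt.2 (h5 z hz)
  have hcc := Finset.card_le_card hcover
  have i1 := Finset.card_union_add_card_inter (Dv P a k) (Dv P b k ∪ Dv P c k)
  have i2 := Finset.card_union_add_card_inter (Dv P b k) (Dv P c k)
  have dbc : Dv P b k ∩ Dv P c k = ∅ := by rw [← Finset.card_eq_zero]; omega
  have da : Dv P a k ∩ (Dv P b k ∪ Dv P c k) = ∅ := by rw [← Finset.card_eq_zero]; omega
  have uniq : ∀ p q : ℝ × ℝ, Dv P p k ∩ Dv P q k = ∅ → ∀ e ∈ DD P k,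
      ¬ (det2 (e.2 - e.1) (p - e.1) < 0 ∧ det2 (e.2 - e.1) (q - e.1) < 0) := by
    rintro p q hpq e he ⟨h1, h2⟩
    have : e ∈ Dv P p k ∩ Dv P q k :=
      Finset.mem_inter.2 ⟨mem_Dv.2 ⟨mem_DD.1 he, h1⟩, mem_Dv.2 ⟨mem_DD.1 he, h2⟩⟩
    rw [hpq] at this
    exact Finset.notMem_empty _ this
  have dab : Dv P a k ∩ Dv P b k = ∅ := by
    rw [← Finset.subset_empty, ← da]
    exact Finset.inter_subset_inter_left Finset.subset_union_left
  have dca : Dv P c k ∩ Dv P a k = ∅ := by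
    rw [Finset.inter_comm, ← Finset.subset_empty, ← da]
    exact Finset.inter_subset_inter_left Finset.subset_union_right
  have eC := consist h ht hk (uniq a b dab)
  have eA := consist h ht.rot hk (uniq b c dbc)
  have eB := consist h ht.rot.rot hk (uniq c a dca)
  have disj : ∀ v ∈ P, Disjoint (F1 P v k) (F2 P v k) := by
    intro v hv
    rw [Finset.disjoint_left]
    intro x hx hx'
    obtain ⟨⟨h1, h2⟩, h3⟩ := mem_F1.1 hx
    have h4 := (mem_F2.1 hx').2
    have := lft_add h hv h2 (Ne.symm h1)
    omega
  have dBC := disj a haE.1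
  have dCA := disj b hbE.1
  have dAB := disj c hcE.1
  obtain ⟨u₁, hu₁⟩ := direction h haE hk (heads_of_card h haE hk ca)
  obtain ⟨u₂, hu₂⟩ := direction h hbE hk (heads_of_card h hbE hk cb)
  obtain ⟨u₃, hu₃⟩ := direction h hcE hk (heads_of_card h hcE hk cc)
  have kB : (F1 P a k).card = k + 1 := F1_card haE h (by omega)
  have kC : (F1 P b k).card = k + 1 := F1_card hbE h (by omega)
  have kA : (F1 P c k).card = k + 1 := F1_card hcE h (by omega)
  have sub : ∀ v, F1 P v k ⊆ P := fun v x hx => (mem_F1.1 hx).1.2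
  rw [eC] at dBC hu₁
  rw [eA] at dCA hu₂
  rw [eB] at dAB hu₃
  exact final hcard (sub c) (sub a) (sub b) kA kB kC dBC dCA dAB hu₁ hu₂ hu₃

/-- **Main Theorem.** Let `n` be a positive multiple of `3` and let `P` be
a set of `n` points in general position in the plane such that
`E_{≤k}(P) = 3·C(k+2,2)` for every `0 ≤ k < n/3`. Then `P` is 3-decomposable. -/
theorem threeDecomposable_of_minimal_leK_edges (n : ℕ) (hn : 0 < n) (h3 : 3 ∣ n)
    (P : Finset (ℝ × ℝ)) (hcard : P.card = n) (hgp : GenPos P)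
    (hE : ∀ k : ℕ, k < n / 3 → EleK P k = 3 * Nat.choose (k + 2) 2) :
    PtSet3Decomposable P := by
  have h := gp_of_genPos hgp
  obtain ⟨m, hm⟩ := h3
  refine main_aux h (m - 1) (by omega) (fun j hj => ?_)
  rw [← EleK_eq h j (by omega)]
  exact hE j (by omega)
end

section
/- Let n be a positive multiple of 3 and let Π be an n-half-period of an allowable sequence 𝚷 such that N_{≤k}(Π) = 3·binom(k+1,2) for every integer k with 1 ≤ k ≤ n/3. Then 𝚷 contains a 3-decomposable n-half-period. -/
/-- An `n`-half-period: a sequence `π_0, …, π_{n(n-1)/2}` of arrangements of `n`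
labeled elements in the positions `1, …, n` (recorded by `pos t x` = the position of
element `x` at time `t`), in which consecutive arrangements differ by a transposition
of the elements in two adjacent positions, and the last arrangement is the reverse of
the first. -/
structure HalfPeriod (n : ℕ) where
  pos : ℕ → Fin n → ℕ
  pos_mem : ∀ t, t ≤ n * (n - 1) / 2 → ∀ x, 1 ≤ pos t x ∧ pos t x ≤ n
  pos_inj : ∀ t, t ≤ n * (n - 1) / 2 → Function.Injective (pos t)
  step : ∀ t, t < n * (n - 1) / 2 → ∃ x y : Fin n,
    pos t y = pos t x + 1 ∧ pos (t + 1) x = pos t x + 1 ∧ pos (t + 1) y = pos t x ∧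
    ∀ z, z ≠ x → z ≠ y → pos (t + 1) z = pos t z
  reverse : ∀ x, pos (n * (n - 1) / 2) x = n + 1 - pos 0 x

namespace HalfPeriod

variable {n : ℕ}

/-- The number of transposition steps of an `n`-half-period. -/
def steps (n : ℕ) : ℕ := n * (n - 1) / 2

/-- Element `x` moves (changes position) at step `t`. -/
def Moved (hp : HalfPeriod n) (t : ℕ) (x : Fin n) : Prop :=
  hp.pos (t + 1) x ≠ hp.pos t x

/-- Step `t` is the transposition of the (distinct) elements `x` and `y`. -/
def SwapsAt (hp : HalfPeriod n) (t : ℕ) (x y : Fin n) : Prop :=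
  x ≠ y ∧ hp.Moved t x ∧ hp.Moved t y

/-- Step `t` is an `i`-transposition: it swaps the elements at positions `i` and `i+1`. -/
def GateAt (hp : HalfPeriod n) (t i : ℕ) : Prop :=
  ∃ x y : Fin n, hp.pos t x = i ∧ hp.pos t y = i + 1 ∧
    hp.pos (t + 1) x = i + 1 ∧ hp.pos (t + 1) y = i

/-- Step `t` is an `i`-critical transposition: an `i`- or an `(n-i)`-transposition. -/
def Critical (hp : HalfPeriod n) (t i : ℕ) : Prop :=
  hp.GateAt t i ∨ hp.GateAt t (n - i)

/-- Step `t` is a `(≤ k)`-critical transposition. -/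
def LeCritical (hp : HalfPeriod n) (t k : ℕ) : Prop :=
  ∃ i, 1 ≤ i ∧ i ≤ k ∧ hp.Critical t i

/-- `N_{≤ k}`: the number of `(≤ k)`-critical transpositions of the half-period. -/
noncomputable def NLe (hp : HalfPeriod n) (k : ℕ) : ℕ :=
  {t : ℕ | t < steps n ∧ hp.LeCritical t k}.ncard

end HalfPeriod
/-- `hp` is a 3-decomposable `n`-half-period witnessed by the labeling
`A = {a 0, …, a (n/3-1)}`, `B`, `C` (the element with 1-indexed subscript `j` is
`a (j-1)`, etc.): the initial arrangement is
`(a_{n/3}, …, a_1, b_1, …, b_{n/3}, c_1, …, c_{n/3})`, every transposition between `A`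
and `B` occurs before every transposition between `C` and `A ∪ B`, and every
transposition between `A` and `C` occurs before every transposition between `B`
and `C`. -/
def IsThreeDecompLabeling {n : ℕ} (hp : HalfPeriod n) (a b c : Fin (n / 3) → Fin n) : Prop :=
  Function.Injective (Sum.elim a (Sum.elim b c)) ∧
  (∀ i, hp.pos 0 (a i) = n / 3 - (i : ℕ)) ∧
  (∀ i, hp.pos 0 (b i) = n / 3 + (i : ℕ) + 1) ∧
  (∀ i, hp.pos 0 (c i) = 2 * (n / 3) + (i : ℕ) + 1) ∧
  (∀ s t, s < HalfPeriod.steps n → t < HalfPeriod.steps n →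
    (∃ i j, hp.SwapsAt s (a i) (b j)) →
    (∃ i x, ((∃ j, x = a j) ∨ (∃ j, x = b j)) ∧ hp.SwapsAt t (c i) x) → s < t) ∧
  (∀ s t, s < HalfPeriod.steps n → t < HalfPeriod.steps n →
    (∃ i j, hp.SwapsAt s (a i) (c j)) →
    (∃ i j, hp.SwapsAt t (b i) (c j)) → s < t)

/-- An `n`-half-period is 3-decomposable if it admits a 3-decomposition labeling. -/
def HalfPeriod.ThreeDecomposable {n : ℕ} (hp : HalfPeriod n) : Prop :=
  ∃ a b c : Fin (n / 3) → Fin n, IsThreeDecompLabeling hp a b c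
/-- An allowable sequence on `n` elements: a doubly infinite sequence of arrangements
of the `n` elements in positions `1, …, n`, consecutive arrangements differing by a
transposition of the elements in two adjacent positions, and the arrangement at time
`t + n(n-1)/2` being the reverse of the one at time `t`. -/
structure AllowableSeq (n : ℕ) where
  pos : ℤ → Fin n → ℕ
  pos_mem : ∀ t x, 1 ≤ pos t x ∧ pos t x ≤ n
  pos_inj : ∀ t, Function.Injective (pos t)
  step : ∀ t : ℤ, ∃ x y : Fin n,
    pos t y = pos t x + 1 ∧ pos (t + 1) x = pos t x + 1 ∧ pos (t + 1) y = pos t x ∧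
    ∀ z, z ≠ x → z ≠ y → pos (t + 1) z = pos t z
  reverse : ∀ (t : ℤ) (x : Fin n), pos (t + ((n * (n - 1) / 2 : ℕ) : ℤ)) x = n + 1 - pos t x

/-- The allowable sequence `S` contains the `n`-half-period `hp`: `hp` consists of
`n(n-1)/2 + 1` consecutive arrangements of `S`. -/
def AllowableSeq.Contains {n : ℕ} (S : AllowableSeq n) (hp : HalfPeriod n) : Prop :=
  ∃ t₀ : ℤ, ∀ t : ℕ, t ≤ n * (n - 1) / 2 → ∀ x, hp.pos t x = S.pos (t₀ + t) x

namespace AllowableSeq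

variable {n : ℕ}

/-- `x` passes `y` (rightwards) at step `t`. -/
def Pass (S : AllowableSeq n) (x y : Fin n) (t : ℤ) : Prop :=
  S.pos t y = S.pos t x + 1 ∧ S.pos (t + 1) x = S.pos t x + 1 ∧ S.pos (t + 1) y = S.pos t x ∧
    ∀ z, z ≠ x → z ≠ y → S.pos (t + 1) z = S.pos t z

/-- half period length -/
def hN (n : ℕ) : ℤ := ((n * (n - 1) / 2 : ℕ) : ℤ)

theorem hN_nonneg (n : ℕ) : 0 ≤ hN n := Int.natCast_nonneg _

theorem rev (S : AllowableSeq n) (t : ℤ) (x : Fin n) :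
    S.pos (t + hN n) x + S.pos t x = n + 1 := by
  have := S.reverse t x
  have := S.pos_mem t x
  unfold hN
  omega

theorem ne_pos (S : AllowableSeq n) {x y : Fin n} (h : x ≠ y) (t : ℤ) :
    S.pos t x ≠ S.pos t y := fun e => h (S.pos_inj t e)

theorem per (S : AllowableSeq n) (t : ℤ) (x : Fin n) :
    S.pos (t + 2 * hN n) x = S.pos t x := by
  have h1 := S.rev t x
  have h2 := S.rev (t + hN n) x
  have : t + 2 * hN n = t + hN n + hN n := by ring
  rw [this]; omega

theorem Pass.ne {S : AllowableSeq n} {x y : Fin n} {t : ℤ} (h : S.Pass x y t) : x ≠ y := by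
  rintro rfl
  have := h.1
  omega

theorem pass_of_change (S : AllowableSeq n) {x y : Fin n} {t : ℤ}
    (h1 : S.pos t x < S.pos t y) (h2 : S.pos (t + 1) y < S.pos (t + 1) x) : S.Pass x y t := by
  obtain ⟨u, v, huv⟩ := S.step t
  obtain ⟨e1, e2, e3, e4⟩ := id huv
  by_cases hxu : x = u
  · by_cases hyv : y = v
    · subst hxu hyv; exact huv
    · have hyu : y ≠ u := by rintro rfl; subst hxu; omega
      have := e4 y hyu hyv
      subst hxu
      omega
  · by_cases hxv : x = v
    · subst hxv
      by_cases hyu : y = u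
      · subst hyu; omega
      · have hyv : y ≠ x := by rintro rfl; omega
        have := e4 y hyu hyv
        omega
    · have hx := e4 x hxu hxv
      by_cases hyu : y = u
      · subst hyu; omega
      · by_cases hyv : y = v
        · subst hyv
          have := S.ne_pos hxu t
          omega
        · have := e4 y hyu hyv
          omega

theorem exists_pass_nat (S : AllowableSeq n) {x y : Fin n} {s : ℤ} (k : ℕ)
    (h1 : S.pos s x < S.pos s y) (h2 : S.pos (s + k) y < S.pos (s + k) x) :
    ∃ t, s ≤ t ∧ t < s + k ∧ S.Pass x y t := by
  induction k with
  | zero => simp at h2; omega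
  | succ k ih =>
    by_cases h : S.pos (s + k) y < S.pos (s + k) x
    · obtain ⟨t, a, b, c⟩ := ih h
      exact ⟨t, a, by push_cast; omega, c⟩
    · refine ⟨s + k, by omega, by push_cast; omega, S.pass_of_change ?_ ?_⟩
      · have hne : x ≠ y := by rintro rfl; omega
        have := S.ne_pos hne (s + k)
        omega
      · have e : s + (k : ℤ) + 1 = s + ((k + 1 : ℕ) : ℤ) := by push_cast; ring
        rw [e]; exact h2

theorem exists_pass (S : AllowableSeq n) {x y : Fin n} {s e : ℤ} (hse : s ≤ e)
    (h1 : S.pos s x < S.pos s y) (h2 : S.pos e y < S.pos e x) :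
    ∃ t, s ≤ t ∧ t < e ∧ S.Pass x y t := by
  obtain ⟨k, hk⟩ := Int.eq_ofNat_of_zero_le (sub_nonneg.2 hse)
  have e1 : e = s + k := by omega
  subst e1
  exact S.exists_pass_nat k h1 h2

theorem exists_pass_half (S : AllowableSeq n) {x y : Fin n} {s : ℤ}
    (h1 : S.pos s x < S.pos s y) :
    ∃ t, s ≤ t ∧ t < s + hN n ∧ S.Pass x y t := by
  apply S.exists_pass (by have := hN_nonneg n; omega) h1
  have a := S.rev s x
  have b := S.rev s y
  omega

theorem pass_unique (S : AllowableSeq n) {x y x' y' : Fin n} {t : ℤ}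
    (h : S.Pass x y t) (h' : S.Pass x' y' t) : x = x' ∧ y = y' := by
  obtain ⟨a1, a2, a3, a4⟩ := h
  obtain ⟨b1, b2, b3, b4⟩ := h'
  have hx : x = x' := by
    by_contra hne
    by_cases h2 : x = y'
    · subst h2; omega
    · have := b4 x hne h2; omega
  subst hx
  exact ⟨rfl, S.pos_inj t (by omega)⟩

theorem once (S : AllowableSeq n) (s : ℤ) {x y x' y' : Fin n} {t t' : ℤ}
    (h : S.Pass x y t) (h' : S.Pass x' y' t') (he : s(x, y) = s(x', y'))
    (h1 : s ≤ t) (h2 : t < s + hN n) (h3 : s ≤ t') (h4 : t' < s + hN n) : t = t' := by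
  classical
  choose u v huv using S.step
  have huv' : ∀ t, S.Pass (u t) (v t) t := huv
  let f : Fin (n * (n - 1) / 2) → {a : Sym2 (Fin n) // ¬ a.IsDiag} := fun i =>
    ⟨s(u (s + (i : ℕ)), v (s + (i : ℕ))), by
      simpa using (huv' (s + (i : ℕ))).ne⟩
  have hsurj : Function.Surjective f := by
    rintro ⟨a, ha⟩
    induction a using Sym2.ind with
    | _ x y =>
      have hxy : x ≠ y := by simpa using ha
      rcases lt_or_gt_of_ne (S.ne_pos hxy s) with hl | hl
      · obtain ⟨t, q1, q2, q3⟩ := S.exists_pass_half hl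
        obtain ⟨k, hk⟩ := Int.eq_ofNat_of_zero_le (sub_nonneg.2 q1)
        have e1 : t = s + k := by omega
        subst e1
        refine ⟨⟨k, by unfold hN at q2; omega⟩, ?_⟩
        obtain ⟨r1, r2⟩ := S.pass_unique q3 (huv' _)
        simp only [f, Subtype.mk.injEq]
        rw [← r1, ← r2]
      · obtain ⟨t, q1, q2, q3⟩ := S.exists_pass_half hl
        obtain ⟨k, hk⟩ := Int.eq_ofNat_of_zero_le (sub_nonneg.2 q1)
        have e1 : t = s + k := by omega
        subst e1
        refine ⟨⟨k, by unfold hN at q2; omega⟩, ?_⟩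
        obtain ⟨r1, r2⟩ := S.pass_unique q3 (huv' _)
        simp only [f, Subtype.mk.injEq]
        rw [← r1, ← r2, Sym2.eq_swap]
  have hcard : Fintype.card (Fin (n * (n - 1) / 2)) =
      Fintype.card {a : Sym2 (Fin n) // ¬ a.IsDiag} := by
    rw [Sym2.card_subtype_not_diag]
    simp [Nat.choose_two_right]
  have hinj : Function.Injective f :=
    ((Fintype.bijective_iff_surjective_and_card f).2 ⟨hsurj, hcard⟩).1
  obtain ⟨k, hk⟩ := Int.eq_ofNat_of_zero_le (sub_nonneg.2 h1)
  obtain ⟨k', hk'⟩ := Int.eq_ofNat_of_zero_le (sub_nonneg.2 h3)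
  have e1 : t = s + k := by omega
  have e2 : t' = s + k' := by omega
  subst e1 e2
  have hh : f ⟨k, by unfold hN at h2; omega⟩ = f ⟨k', by unfold hN at h4; omega⟩ := by
    simp only [f, Subtype.mk.injEq]
    obtain ⟨r1, r2⟩ := S.pass_unique h (huv' _)
    obtain ⟨r3, r4⟩ := S.pass_unique h' (huv' _)
    rw [← r1, ← r2, ← r3, ← r4, he]
  have := hinj hh
  simp at this
  omega

theorem after (S : AllowableSeq n) {x y : Fin n} {t : ℤ} (h : S.Pass x y t) (s : ℤ)
    (h1 : t < s) (h2 : s ≤ t + hN n) : S.pos s y < S.pos s x := by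
  by_contra hc
  have := S.ne_pos h.ne s
  have h0 : S.pos (t + 1) y < S.pos (t + 1) x := by
    obtain ⟨a1, a2, a3, a4⟩ := h; omega
  obtain ⟨t', q1, q2, q3⟩ := S.exists_pass (s := t + 1) (e := s) (by omega) h0 (by omega)
  have := S.once t h q3 Sym2.eq_swap (by omega) (by omega) (by omega) (by omega)
  omega

theorem before (S : AllowableSeq n) {x y : Fin n} {t : ℤ} (h : S.Pass x y t) (s : ℤ)
    (h1 : t - hN n < s) (h2 : s ≤ t) : S.pos s x < S.pos s y := by
  have := S.after h (s + hN n) (by omega) (by omega)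
  have a := S.rev s x
  have b := S.rev s y
  omega

theorem Pass.rev {S : AllowableSeq n} {x y : Fin n} {t : ℤ} (h : S.Pass x y t) :
    S.Pass y x (t + hN n) := by
  apply S.pass_of_change
  · have a := S.rev t x
    have b := S.rev t y
    have := h.1
    omega
  · have e : t + hN n + 1 = t + 1 + hN n := by ring
    rw [e]
    have a := S.rev (t + 1) x
    have b := S.rev (t + 1) y
    obtain ⟨a1, a2, a3, a4⟩ := h
    omega

theorem hN_pos_of_ne {x y : Fin n} (h : x ≠ y) : 0 < hN n := by
  have h1 : 2 ≤ n := by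
    have := x.2; have := y.2
    by_contra hc
    exact h (Fin.ext (by omega))
  unfold hN
  have : 2 ≤ n * (n - 1) := by
    calc 2 = 2 * 1 := rfl
      _ ≤ n * (n - 1) := Nat.mul_le_mul h1 (by omega)
  omega

theorem per_int (S : AllowableSeq n) (t : ℤ) (x : Fin n) (k : ℤ) :
    S.pos (t + k * (2 * hN n)) x = S.pos t x := by
  induction k using Int.induction_on with
  | zero => simp
  | succ i ih =>
    rw [← ih, ← S.per (t + i * (2 * hN n))]
    congr 1; ring
  | pred i ih =>
    rw [← ih, ← S.per (t + (-i - 1) * (2 * hN n))]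
    congr 1; ring

theorem pass_mod (S : AllowableSeq n) {x y : Fin n} {t t' : ℤ} (h : S.Pass x y t)
    (h' : S.Pass x y t') : ∃ k : ℤ, t' = t + k * (2 * hN n) := by
  have hp := hN_pos_of_ne h.ne
  refine ⟨(t' - t) / (2 * hN n), ?_⟩
  have e := Int.emod_add_mul_ediv (t' - t) (2 * hN n)
  have r0 := Int.emod_nonneg (t' - t) (b := 2 * hN n) (by omega)
  have r1 := Int.emod_lt_of_pos (t' - t) (b := 2 * hN n) (by omega)
  set r := (t' - t) % (2 * hN n)
  set k := (t' - t) / (2 * hN n)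
  have e' : t' = (t + r) + k * (2 * hN n) := by linarith
  have e'' : t' + 1 = (t + r + 1) + k * (2 * hN n) := by linarith
  have l1 : S.pos (t + r) x < S.pos (t + r) y := by
    have := h'.1
    rw [e', S.per_int, S.per_int] at this
    omega
  have l2 : S.pos (t + r + 1) y < S.pos (t + r + 1) x := by
    have q2 := h'.2.1
    have q3 := h'.2.2.1
    rw [e'', S.per_int, e', S.per_int] at q2 q3
    omega
  by_cases hr : r = 0
  · rw [e', hr]; ring
  · exfalso
    by_cases hr2 : r ≤ hN n
    · have := S.after h (t + r) (by omega) (by omega)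
      omega
    · have := S.after h.rev (t + r + 1) (by omega) (by omega)
      omega

theorem pass_pos (S : AllowableSeq n) {x y : Fin n} {t t' : ℤ} (h : S.Pass x y t)
    (h' : S.Pass x y t') (z : Fin n) : S.pos t' z = S.pos t z := by
  obtain ⟨k, rfl⟩ := S.pass_mod h h'
  exact S.per_int t z k

theorem exists_pass_all (S : AllowableSeq n) {x y : Fin n} (h : x ≠ y) : ∃ t, S.Pass x y t := by
  rcases lt_or_gt_of_ne (S.ne_pos h 0) with hl | hl
  · obtain ⟨t, _, _, q⟩ := S.exists_pass_half hl
    exact ⟨t, q⟩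
  · obtain ⟨t, _, _, q⟩ := S.exists_pass_half hl
    exact ⟨_, q.rev⟩

theorem mono_step (S : AllowableSeq n) {x : Fin n} {t0 : ℤ} (h : S.pos t0 x = 1) (k : ℕ)
    (hk : (k : ℤ) < hN n) : S.pos (t0 + k) x ≤ S.pos (t0 + k + 1) x := by
  by_contra hc
  obtain ⟨u, v, huv⟩ := S.step (t0 + k)
  have hP : S.Pass u v (t0 + k) := huv
  obtain ⟨e1, e2, e3, e4⟩ := huv
  have hxu : x ≠ u := by rintro rfl; omega
  have hxv : x = v := by
    by_contra hxv
    have := e4 x hxu hxv; omega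
  subst hxv
  have := S.before hP t0 (by omega) (by omega)
  have := (S.pos_mem t0 u).1
  omega

theorem mono (S : AllowableSeq n) {x : Fin n} {t0 : ℤ} (h : S.pos t0 x = 1) {s e : ℤ}
    (h1 : t0 ≤ s) (h2 : s ≤ e) (h3 : e ≤ t0 + hN n) : S.pos s x ≤ S.pos e x := by
  obtain ⟨k, hk⟩ := Int.eq_ofNat_of_zero_le (sub_nonneg.2 h2)
  have e1 : e = s + k := by omega
  subst e1
  clear hk h2
  induction k with
  | zero => simp
  | succ k ih =>
    push_cast at h3
    have i1 := ih (by omega)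
    obtain ⟨j, hj⟩ := Int.eq_ofNat_of_zero_le (sub_nonneg.2 h1)
    have i2 := S.mono_step h (j + k) (by push_cast; omega)
    have e2 : t0 + ((j + k : ℕ) : ℤ) = s + k := by push_cast; omega
    rw [e2] at i2
    have e3 : s + ((k + 1 : ℕ) : ℤ) = s + k + 1 := by push_cast; ring
    rw [e3]
    omega

theorem anti (S : AllowableSeq n) {x : Fin n} {t0 : ℤ} (h : S.pos t0 x = n) {s e : ℤ}
    (h1 : t0 ≤ s) (h2 : s ≤ e) (h3 : e ≤ t0 + hN n) : S.pos e x ≤ S.pos s x := by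
  have r0 := S.rev t0 x
  have := S.mono (x := x) (t0 := t0 + hN n) (by omega) (s := s + hN n) (e := e + hN n)
    (by omega) (by omega) (by omega)
  have := S.rev s x
  have := S.rev e x
  omega

/-- `z` is to the left when `x` passes `y`. -/
def Lf (S : AllowableSeq n) (x y z : Fin n) : Prop := ∃ t, S.Pass x y t ∧ S.pos t z < S.pos t x

theorem Lf_iff (S : AllowableSeq n) {x y : Fin n} {t : ℤ} (h : S.Pass x y t) (z : Fin n) :
    S.Lf x y z ↔ S.pos t z < S.pos t x := by
  constructor
  · rintro ⟨t', h', hl⟩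
    rwa [S.pass_pos h h', S.pass_pos h h'] at hl
  · exact fun hl => ⟨t, h, hl⟩

theorem Lf_ne (S : AllowableSeq n) {x y z : Fin n} (h : S.Lf x y z) : z ≠ x ∧ z ≠ y := by
  obtain ⟨t, h', hl⟩ := h
  have := h'.1
  constructor
  · rintro rfl; omega
  · rintro rfl; omega

theorem Lf_rev (S : AllowableSeq n) {x y z : Fin n} (hxy : x ≠ y) (hx : z ≠ x) (hy : z ≠ y) :
    S.Lf y x z ↔ ¬ S.Lf x y z := by
  obtain ⟨t, h⟩ := S.exists_pass_all hxy
  rw [S.Lf_iff h, S.Lf_iff h.rev]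
  have a := S.rev t z
  have b := S.rev t y
  have c := S.ne_pos hx t
  have d := S.ne_pos hy t
  have := h.1
  omega

open Classical in
/-- number of elements of `X` on the left when `x` passes `y` -/
noncomputable def ell (S : AllowableSeq n) (X : Finset (Fin n)) (x y : Fin n) : ℕ :=
  (X.filter (fun z => S.Lf x y z)).card

theorem ell_rev (S : AllowableSeq n) {X : Finset (Fin n)} {x y : Fin n} (hx : x ∈ X) (hy : y ∈ X)
    (hxy : x ≠ y) : S.ell X x y + S.ell X y x + 2 = X.card := by
  classical
  have e1 : X.filter (fun z => S.Lf x y z) = ((X.erase x).erase y).filter (fun z => S.Lf x y z) := by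
    ext z
    simp only [Finset.mem_filter, Finset.mem_erase]
    constructor
    · rintro ⟨a, b⟩
      exact ⟨⟨(S.Lf_ne b).2, (S.Lf_ne b).1, a⟩, b⟩
    · rintro ⟨⟨_, _, a⟩, b⟩
      exact ⟨a, b⟩
  have e2 : X.filter (fun z => S.Lf y x z) =
      ((X.erase x).erase y).filter (fun z => ¬ S.Lf x y z) := by
    ext z
    simp only [Finset.mem_filter, Finset.mem_erase]
    constructor
    · rintro ⟨a, b⟩
      have := S.Lf_ne b
      exact ⟨⟨this.1, this.2, a⟩, (S.Lf_rev hxy this.2 this.1).1 b⟩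
    · rintro ⟨⟨p, q, a⟩, b⟩
      exact ⟨a, (S.Lf_rev hxy q p).2 b⟩
  have e3 := Finset.card_filter_add_card_filter_not (s := (X.erase x).erase y) (fun z => S.Lf x y z)
  have e4 : ((X.erase x).erase y).card = X.card - 1 - 1 := by
    rw [Finset.card_erase_of_mem, Finset.card_erase_of_mem hx]
    simp [hy, hxy.symm]
  have e5 : 1 < X.card := Finset.one_lt_card.2 ⟨x, hx, y, hy, hxy⟩
  unfold ell
  rw [e1, e2]
  omega

/-- `p` is extreme in `X`. -/
def Ext (S : AllowableSeq n) (X : Finset (Fin n)) (p : Fin n) : Prop :=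
  p ∈ X ∧ ∃ t, ∀ z ∈ X, z ≠ p → S.pos t p < S.pos t z

theorem ell_lt_of (S : AllowableSeq n) {X : Finset (Fin n)} {p y y' : Fin n} {t u u' : ℤ}
    (ht : ∀ z ∈ X, z ≠ p → S.pos t p < S.pos t z) (hy : y ∈ X)
    (h : S.Pass p y u) (h' : S.Pass p y' u') (h1 : t ≤ u) (h2 : u < u') (h3 : u' < t + hN n) :
    S.ell X p y < S.ell X p y' := by
  classical
  unfold ell
  apply Finset.card_lt_card
  rw [Finset.ssubset_iff_of_subset]
  · refine ⟨y, ?_, ?_⟩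
    · rw [Finset.mem_filter, S.Lf_iff h']
      exact ⟨hy, S.after h u' h2 (by omega)⟩
    · rw [Finset.mem_filter]
      rintro ⟨_, b⟩
      exact (S.Lf_ne b).2 rfl
  · intro z hz
    rw [Finset.mem_filter] at hz ⊢
    refine ⟨hz.1, ?_⟩
    have hne := S.Lf_ne hz.2
    have hz2 := (S.Lf_iff h z).1 hz.2
    rw [S.Lf_iff h']
    obtain ⟨w, w1, w2, w3⟩ := S.exists_pass h1 (ht z hz.1 hne.1) hz2
    exact S.after w3 u' (by omega) (by omega)

theorem ext_inj (S : AllowableSeq n) {X : Finset (Fin n)} {p y y' : Fin n} (hp : S.Ext X p)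
    (hy : y ∈ X) (hy' : y' ∈ X) (hyp : y ≠ p) (hyp' : y' ≠ p)
    (he : S.ell X p y = S.ell X p y') : y = y' := by
  obtain ⟨_, t, ht⟩ := hp
  obtain ⟨u, a1, a2, a3⟩ := S.exists_pass_half (ht y hy hyp)
  obtain ⟨u', b1, b2, b3⟩ := S.exists_pass_half (ht y' hy' hyp')
  rcases lt_trichotomy u u' with h | h | h
  · have := S.ell_lt_of ht hy a3 b3 a1 h b2
    omega
  · subst h
    exact (S.pass_unique a3 b3).2
  · have := S.ell_lt_of ht hy' b3 a3 b1 h a2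
    omega

theorem count_inj {α : Type*} [DecidableEq α] (Y : Finset α) (g : α → ℕ) (M K : ℕ)
    (hM : Y.card = M)
    (hg : ∀ y ∈ Y, g y < M) (hinj : ∀ y ∈ Y, ∀ y' ∈ Y, g y = g y' → y = y') (hK : K ≤ M) :
    (Y.filter (fun y => g y < K)).card = K := by
  have himg : Y.image g = Finset.range M := by
    apply Finset.eq_of_subset_of_card_le
    · intro a ha
      obtain ⟨y, hy, rfl⟩ := Finset.mem_image.1 ha
      exact Finset.mem_range.2 (hg y hy)
    · rw [Finset.card_image_of_injOn (fun y hy y' hy' h => hinj y hy y' hy' h), hM,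
        Finset.card_range]
  have h2 : (Y.filter (fun y => g y < K)).image g = Finset.range K := by
    ext a
    simp only [Finset.mem_image, Finset.mem_filter, Finset.mem_range]
    constructor
    · rintro ⟨y, ⟨_, h⟩, rfl⟩; exact h
    · intro ha
      have : a ∈ Y.image g := by rw [himg]; exact Finset.mem_range.2 (by omega)
      obtain ⟨y, hy, rfl⟩ := Finset.mem_image.1 this
      exact ⟨y, ⟨hy, ha⟩, rfl⟩
  have h3 : ((Y.filter (fun y => g y < K)).image g).card = (Y.filter (fun y => g y < K)).card := by
    apply Finset.card_image_of_injOn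
    intro y hy y' hy' h
    simp only [Finset.coe_filter, Set.mem_ofPred_eq] at hy hy'
    exact hinj y hy.1 y' hy'.1 h
  rw [h2, Finset.card_range] at h3
  exact h3.symm

open Classical in
theorem count_out (S : AllowableSeq n) {X : Finset (Fin n)} {p : Fin n} (hp : S.Ext X p) (K : ℕ)
    (hK : K + 1 ≤ X.card) : ((X.erase p).filter (fun y => S.ell X p y < K)).card = K := by
  apply count_inj _ _ (X.card - 1) _ (Finset.card_erase_of_mem hp.1)
  · intro y hy
    rw [Finset.mem_erase] at hy
    have := S.ell_rev hp.1 hy.2 hy.1.symm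
    omega
  · intro y hy y' hy' h
    rw [Finset.mem_erase] at hy hy'
    exact S.ext_inj hp hy.2 hy'.2 hy.1 hy'.1 h
  · omega

open Classical in
theorem count_in (S : AllowableSeq n) {X : Finset (Fin n)} {p : Fin n} (hp : S.Ext X p) (K : ℕ)
    (hK : K + 1 ≤ X.card) : ((X.erase p).filter (fun y => S.ell X y p < K)).card = K := by
  apply count_inj _ _ (X.card - 1) _ (Finset.card_erase_of_mem hp.1)
  · intro y hy
    rw [Finset.mem_erase] at hy
    have := S.ell_rev hp.1 hy.2 hy.1.symm
    omega
  · intro y hy y' hy' h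
    rw [Finset.mem_erase] at hy hy'
    have := S.ell_rev hp.1 hy.2 hy.1.symm
    have := S.ell_rev hp.1 hy'.2 hy'.1.symm
    exact S.ext_inj hp hy.2 hy'.2 hy.1 hy'.1 (by omega)
  · omega

theorem zero_ext (S : AllowableSeq n) {X : Finset (Fin n)} {x y : Fin n} (hx : x ∈ X) (hy : y ∈ X)
    (hxy : x ≠ y) (h : S.ell X x y = 0) : S.Ext X x ∧ S.Ext X y := by
  classical
  obtain ⟨t, ht⟩ := S.exists_pass_all hxy
  unfold ell at h
  rw [Finset.card_eq_zero, Finset.filter_eq_empty_iff] at h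
  have key : ∀ z ∈ X, z ≠ x → S.pos t x < S.pos t z := by
    intro z hz hzx
    have := h hz
    rw [S.Lf_iff ht] at this
    have := S.ne_pos hzx t
    omega
  refine ⟨⟨hx, t, key⟩, hy, t + 1, ?_⟩
  intro z hz hzy
  obtain ⟨a1, a2, a3, a4⟩ := ht
  by_cases hzx : z = x
  · subst hzx; omega
  · have := a4 z hzx hzy
    have := key z hz hzx
    omega

theorem sep (S : AllowableSeq n) {X : Finset (Fin n)} {x y : Fin n} (hx : x ∈ X)
    (hxy : x ≠ y) : ∃ p, S.Ext X p ∧ (p = x ∨ S.Lf x y p) := by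
  obtain ⟨t, ht⟩ := S.exists_pass_all hxy
  obtain ⟨p, hp, hmin⟩ := Finset.exists_min_image X (S.pos t) ⟨x, hx⟩
  refine ⟨p, ⟨hp, t, ?_⟩, ?_⟩
  · intro z hz hzp
    have := S.ne_pos hzp t
    have := hmin z hz
    omega
  · by_cases h : p = x
    · exact Or.inl h
    · right
      rw [S.Lf_iff ht]
      have := S.ne_pos h t
      have := hmin x hx
      omega

open Classical in
/-- number of ordered pairs with few elements on the left -/
noncomputable def T (S : AllowableSeq n) (X : Finset (Fin n)) (k : ℕ) : ℕ :=
  (X.offDiag.filter (fun e => S.ell X e.1 e.2 < k)).card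

theorem exists_next (S : AllowableSeq n) {X : Finset (Fin n)} {p : Fin n} (hp : S.Ext X p)
    (hX : 2 ≤ X.card) : ∃ r ∈ X, r ≠ p ∧ S.ell X p r = 0 := by
  classical
  have := S.count_out hp 1 hX
  obtain ⟨r, hr⟩ := Finset.card_pos.1 (by rw [this]; exact one_pos)
  rw [Finset.mem_filter, Finset.mem_erase] at hr
  exact ⟨r, hr.1.2, hr.1.1, by omega⟩

theorem exists_prev (S : AllowableSeq n) {X : Finset (Fin n)} {p : Fin n} (hp : S.Ext X p)
    (hX : 2 ≤ X.card) : ∃ r ∈ X, r ≠ p ∧ S.ell X r p = 0 := by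
  classical
  have := S.count_in hp 1 hX
  obtain ⟨r, hr⟩ := Finset.card_pos.1 (by rw [this]; exact one_pos)
  rw [Finset.mem_filter, Finset.mem_erase] at hr
  exact ⟨r, hr.1.2, hr.1.1, by omega⟩

/-- the triangle hull -/
structure Tri (S : AllowableSeq n) (X : Finset (Fin n)) (p r q : Fin n) : Prop where
  hp : S.Ext X p
  hr : S.Ext X r
  hq : S.Ext X q
  pr : p ≠ r
  rq : r ≠ q
  qp : q ≠ p
  epr : S.ell X p r = 0
  erq : S.ell X r q = 0
  eqp : S.ell X q p = 0
  all : ∀ e, S.Ext X e → e = p ∨ e = r ∨ e = q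

theorem tri (S : AllowableSeq n) {X : Finset (Fin n)} (hX : 3 ≤ X.card) :
    3 ≤ S.T X 1 ∧ (S.T X 1 ≤ 3 → ∃ p r q, S.Tri X p r q) := by
  classical
  obtain ⟨x, hx, y, hy, hxy⟩ := Finset.one_lt_card.1 (show 1 < X.card by omega)
  obtain ⟨p, hp, _⟩ := S.sep hx hxy
  obtain ⟨r, hr, hrp, epr⟩ := S.exists_next hp (by omega)
  have hr' := (S.zero_ext hp.1 hr hrp.symm epr).2
  obtain ⟨q, hq, hqr, erq⟩ := S.exists_next hr' (by omega)
  have hq' := (S.zero_ext hr'.1 hq hqr.symm erq).2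
  obtain ⟨w, hw, hwq, eqw⟩ := S.exists_next hq' (by omega)
  have nrp : S.ell X r p ≠ 0 := by
    have := S.ell_rev hp.1 hr hrp.symm
    omega
  have hqp : q ≠ p := by
    rintro rfl
    exact nrp erq
  set Z := X.offDiag.filter (fun e => S.ell X e.1 e.2 < 1) with hZ
  have hsub : ({(p, r), (r, q), (q, w)} : Finset (Fin n × Fin n)) ⊆ Z := by
    intro e he
    simp only [Finset.mem_insert, Finset.mem_singleton] at he
    rw [hZ, Finset.mem_filter, Finset.mem_offDiag]
    rcases he with rfl | rfl | rfl
    · exact ⟨⟨hp.1, hr, hrp.symm⟩, by simp [epr]⟩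
    · exact ⟨⟨hr, hq, hqr.symm⟩, by simp [erq]⟩
    · exact ⟨⟨hq, hw, hwq.symm⟩, by simp [eqw]⟩
  have hc3 : ({(p, r), (r, q), (q, w)} : Finset (Fin n × Fin n)).card = 3 := by
    rw [Finset.card_eq_three]
    refine ⟨_, _, _, ?_, ?_, ?_, rfl⟩
    · simp [hrp.symm]
    · simp [hqp.symm]
    · simp [hqr.symm]
  refine ⟨?_, ?_⟩
  · rw [← hc3]; exact Finset.card_le_card hsub
  · intro hle
    have hZeq : ({(p, r), (r, q), (q, w)} : Finset (Fin n × Fin n)) = Z :=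
      Finset.eq_of_subset_of_card_le hsub (by rw [hc3]; exact hle)
    have hmem : ∀ a ∈ X, ∀ b ∈ X, a ≠ b → S.ell X a b = 0 →
        (a = p ∧ b = r) ∨ (a = r ∧ b = q) ∨ (a = q ∧ b = w) := by
      intro a ha b hb hab h0
      have : (a, b) ∈ Z := by
        rw [hZ, Finset.mem_filter, Finset.mem_offDiag]
        exact ⟨⟨ha, hb, hab⟩, by simp [h0]⟩
      rw [← hZeq] at this
      simpa using this
    have hwp : S.ell X q p = 0 := by
      obtain ⟨v, hv, hvp, evp⟩ := S.exists_prev hp (by omega)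
      rcases hmem v hv p hp.1 hvp evp with h | h | h
      · exact absurd h.1 hvp
      · exact absurd h.2.symm hqp
      · rw [h.1] at evp; exact evp
    refine ⟨p, r, q, hp, hr', hq', hrp.symm, hqr.symm, hqp, epr, erq, hwp, ?_⟩
    intro e he
    obtain ⟨v, hv, hve, ev⟩ := S.exists_next he (by omega)
    rcases hmem e he.1 v hv hve.symm ev with h | h | h
    · exact Or.inl h.1
    · exact Or.inr (Or.inl h.1)
    · exact Or.inr (Or.inr h.1)

open Classical in
theorem Tri.ell_eq {S : AllowableSeq n} {X : Finset (Fin n)} {p r q : Fin n} (h : S.Tri X p r q)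
    (x y : Fin n) : S.ell X x y = S.ell (X \ {p, r, q}) x y +
      (({p, r, q} : Finset (Fin n)).filter (fun z => S.Lf x y z)).card := by
  have hsub : ({p, r, q} : Finset (Fin n)) ⊆ X := by
    intro z hz
    simp only [Finset.mem_insert, Finset.mem_singleton] at hz
    rcases hz with rfl | rfl | rfl
    · exact h.hp.1
    · exact h.hr.1
    · exact h.hq.1
  unfold ell
  rw [← Finset.card_union_of_disjoint, ← Finset.filter_union, Finset.sdiff_union_of_subset hsub]
  exact Finset.disjoint_filter_filter Finset.sdiff_disjoint

open Classical in
theorem Tri.one_le {S : AllowableSeq n} {X : Finset (Fin n)} {p r q : Fin n} (h : S.Tri X p r q)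
    {x y : Fin n} (hx : x ∈ X \ {p, r, q}) (hxy : x ≠ y) :
    1 ≤ (({p, r, q} : Finset (Fin n)).filter (fun z => S.Lf x y z)).card := by
  rw [Finset.mem_sdiff] at hx
  obtain ⟨e, he, h1⟩ := S.sep hx.1 hxy
  have hem : e ∈ ({p, r, q} : Finset (Fin n)) := by
    simpa using h.all e he
  apply Finset.card_pos.2
  refine ⟨e, Finset.mem_filter.2 ⟨hem, ?_⟩⟩
  rcases h1 with h1 | h1
  · rw [h1] at hem; exact absurd hem hx.2
  · exact h1

open Classical in
theorem Tri.le_two {S : AllowableSeq n} {X : Finset (Fin n)} {p r q : Fin n} (h : S.Tri X p r q)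
    {x y : Fin n} (hx : x ∈ X \ {p, r, q}) (hy : y ∈ X \ {p, r, q}) (hxy : x ≠ y) :
    (({p, r, q} : Finset (Fin n)).filter (fun z => S.Lf x y z)).card ≤ 2 := by
  have h1 := h.one_le hy hxy.symm
  have h2 := h.ell_eq x y
  have h3 := h.ell_eq y x
  have hx' := Finset.mem_sdiff.1 hx
  have hy' := Finset.mem_sdiff.1 hy
  have h4 := S.ell_rev hx'.1 hy'.1 hxy
  have h5 := S.ell_rev hx hy hxy
  have hsub : ({p, r, q} : Finset (Fin n)) ⊆ X := by
    intro z hz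
    simp only [Finset.mem_insert, Finset.mem_singleton] at hz
    rcases hz with rfl | rfl | rfl
    · exact h.hp.1
    · exact h.hr.1
    · exact h.hq.1
  have h6 := Finset.card_sdiff_of_subset hsub
  have h7 : ({p, r, q} : Finset (Fin n)).card ≤ 3 := Finset.card_le_three
  omega

theorem Tri.card_sdiff {S : AllowableSeq n} {X : Finset (Fin n)} {p r q : Fin n}
    (h : S.Tri X p r q) : (X \ {p, r, q}).card = X.card - 3 := by
  have hsub : ({p, r, q} : Finset (Fin n)) ⊆ X := by
    intro z hz
    simp only [Finset.mem_insert, Finset.mem_singleton] at hz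
    rcases hz with rfl | rfl | rfl
    · exact h.hp.1
    · exact h.hr.1
    · exact h.hq.1
  rw [Finset.card_sdiff_of_subset hsub]
  congr 1
  rw [Finset.card_eq_three]
  exact ⟨_, _, _, h.pr, h.qp.symm, h.rq, rfl⟩

open Classical in
theorem Tri.count {S : AllowableSeq n} {X : Finset (Fin n)} {p r q : Fin n} (h : S.Tri X p r q)
    (K : ℕ) (hK : K + 2 ≤ X.card) :
    6 * K + ((X \ {p, r, q}).offDiag.filter (fun e => S.ell X e.1 e.2 < K)).card
      ≤ S.T X K + 3 := by
  set P : Finset (Fin n) := {p, r, q} with hP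
  have hPc : P.card = 3 := by
    rw [Finset.card_eq_three]
    exact ⟨_, _, _, h.pr, h.qp.symm, h.rq, rfl⟩
  have hPE : ∀ e ∈ P, S.Ext X e := by
    intro z hz
    rw [hP] at hz
    simp only [Finset.mem_insert, Finset.mem_singleton] at hz
    rcases hz with rfl | rfl | rfl
    · exact h.hp
    · exact h.hr
    · exact h.hq
  unfold T
  set Z := X.offDiag.filter (fun e => S.ell X e.1 e.2 < K) with hZ
  set D := (X \ P).offDiag.filter (fun e => S.ell X e.1 e.2 < K) with hD
  set A := Z.filter (fun e => e.1 ∈ P) with hA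
  set B := Z.filter (fun e => e.2 ∈ P) with hB
  have cA : 3 * K ≤ A.card := by
    rw [Finset.card_eq_sum_card_fiberwise (s := A) (t := P) (f := Prod.fst)
      (fun e he => (Finset.mem_filter.1 he).2), ← hPc, ← smul_eq_mul]
    apply Finset.card_nsmul_le_sum
    intro e he
    rw [← S.count_out (hPE e he) K (by omega),
      ← Finset.card_image_of_injective _ (Prod.mk_right_injective e)]
    apply Finset.card_le_card
    intro z hz
    obtain ⟨y, hy, rfl⟩ := Finset.mem_image.1 hz
    rw [Finset.mem_filter, Finset.mem_erase] at hy
    simp only [hA, hZ, Finset.mem_filter, Finset.mem_offDiag]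
    exact ⟨⟨⟨⟨(hPE e he).1, hy.1.2, hy.1.1.symm⟩, hy.2⟩, he⟩, trivial⟩
  have cB : 3 * K ≤ B.card := by
    rw [Finset.card_eq_sum_card_fiberwise (s := B) (t := P) (f := Prod.snd)
      (fun e he => (Finset.mem_filter.1 he).2), ← hPc, ← smul_eq_mul]
    apply Finset.card_nsmul_le_sum
    intro e he
    rw [← S.count_in (hPE e he) K (by omega),
      ← Finset.card_image_of_injective _ (Prod.mk_left_injective e)]
    apply Finset.card_le_card
    intro z hz
    obtain ⟨y, hy, rfl⟩ := Finset.mem_image.1 hz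
    rw [Finset.mem_filter, Finset.mem_erase] at hy
    simp only [hB, hZ, Finset.mem_filter, Finset.mem_offDiag]
    exact ⟨⟨⟨⟨hy.1.2, (hPE e he).1, hy.1.1⟩, hy.2⟩, he⟩, trivial⟩
  have cAB : (A ∩ B).card ≤ 3 := by
    refine le_trans (Finset.card_le_card
      (t := ({(p, r), (r, q), (q, p)} : Finset (Fin n × Fin n))) ?_) Finset.card_le_three
    rintro ⟨x, y⟩ hxy
    simp only [hA, hB, hZ, hP, Finset.mem_inter, Finset.mem_filter, Finset.mem_offDiag,
      Finset.mem_insert, Finset.mem_singleton] at hxy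
    obtain ⟨⟨⟨⟨_, _, hne⟩, hl⟩, hx⟩, _, hy⟩ := hxy
    have e1 := S.ell_rev h.hp.1 h.hr.1 h.pr
    have e2 := S.ell_rev h.hr.1 h.hq.1 h.rq
    have e3 := S.ell_rev h.hq.1 h.hp.1 h.qp
    rw [h.epr] at e1
    rw [h.erq] at e2
    rw [h.eqp] at e3
    simp only [Finset.mem_insert, Finset.mem_singleton, Prod.mk.injEq]
    rcases hx with rfl | rfl | rfl <;> rcases hy with rfl | rfl | rfl
    all_goals first
      | exact absurd rfl hne
      | (exfalso; omega)
      | simp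
  have cU := Finset.card_union_add_card_inter A B
  have hdis : Disjoint (A ∪ B) D := by
    rw [Finset.disjoint_left]
    rintro ⟨x, y⟩ h1 h2
    simp only [hD, Finset.mem_filter, Finset.mem_offDiag, Finset.mem_sdiff] at h2
    simp only [hA, hB, Finset.mem_union, Finset.mem_filter] at h1
    rcases h1 with h1 | h1
    · exact h2.1.1.2 h1.2
    · exact h2.1.2.1.2 h1.2
  have hsub : (A ∪ B) ∪ D ⊆ Z := by
    intro e he
    rcases Finset.mem_union.1 he with he | he
    · rcases Finset.mem_union.1 he with he | he
      · exact (Finset.mem_filter.1 he).1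
      · exact (Finset.mem_filter.1 he).1
    · simp only [hD, Finset.mem_filter, Finset.mem_offDiag, Finset.mem_sdiff] at he
      simp only [hZ, Finset.mem_filter, Finset.mem_offDiag]
      exact ⟨⟨he.1.1.1, he.1.2.1.1, he.1.2.2⟩, he.2⟩
  have c1 := Finset.card_le_card hsub
  rw [Finset.card_union_of_disjoint hdis] at c1
  omega

theorem choose_aux (j : ℕ) : 3 * Nat.choose (j + 3) 2 = 3 * Nat.choose (j + 1) 2 + 6 * (j + 2) - 3 := by
  have h1 : Nat.choose (j + 3) 2 = (j + 2) + Nat.choose (j + 2) 2 := by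
    rw [show j + 3 = (j + 2) + 1 from rfl, Nat.choose_succ_succ' (j + 2) 1]; simp
  have h2 : Nat.choose (j + 2) 2 = (j + 1) + Nat.choose (j + 1) 2 := by
    rw [show j + 2 = (j + 1) + 1 from rfl, Nat.choose_succ_succ' (j + 1) 1]; simp
  omega

open Classical in
theorem Tri.sub_le {S : AllowableSeq n} {X : Finset (Fin n)} {p r q : Fin n} (h : S.Tri X p r q)
    (j : ℕ) : (X \ {p, r, q}).offDiag.filter (fun e => S.ell (X \ {p, r, q}) e.1 e.2 < j) ⊆
     (X \ {p, r, q}).offDiag.filter (fun e => S.ell X e.1 e.2 < j + 2) := by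
  rintro ⟨x, y⟩ hxy
  rw [Finset.mem_filter, Finset.mem_offDiag] at hxy ⊢
  refine ⟨hxy.1, ?_⟩
  have h1 := h.le_two hxy.1.1 hxy.1.2.1 hxy.1.2.2
  have h2 := h.ell_eq x y
  have h3 := hxy.2
  simp only at h1 h2 h3 ⊢
  omega

theorem T_zero (S : AllowableSeq n) (X : Finset (Fin n)) : S.T X 0 = 0 := by
  simp [T]

theorem Tri.T_sub {S : AllowableSeq n} {X : Finset (Fin n)} {p r q : Fin n} (h : S.Tri X p r q)
    (j : ℕ) (hj : j + 4 ≤ X.card) : 6 * (j + 2) + S.T (X \ {p, r, q}) j ≤ S.T X (j + 2) + 3 := by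
  classical
  refine le_trans ?_ (h.count (j + 2) (by omega))
  have := Finset.card_le_card (h.sub_le j)
  unfold T
  omega

theorem lower (S : AllowableSeq n) : ∀ (c : ℕ) (X : Finset (Fin n)), X.card = c → ∀ k, 3 * k ≤ c →
    (∀ j ≤ k, S.T X j ≤ 3 * Nat.choose (j + 1) 2) → ∀ j ≤ k, S.T X j = 3 * Nat.choose (j + 1) 2 := by
  intro c
  induction c using Nat.strong_induction_on with
  | _ c ih =>
    intro X hX k hk hle j hj
    match j, hj with
    | 0, _ => simp [T_zero]
    | 1, hj =>
      have := (S.tri (X := X) (by omega)).1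
      have := hle 1 hj
      simp at this ⊢
      omega
    | j + 2, hj =>
      have h1 := hle 1 (by omega)
      obtain ⟨p, r, q, h⟩ := (S.tri (X := X) (by omega)).2 (by simpa using h1)
      have hc := h.card_sdiff
      have key : S.T (X \ {p, r, q}) j = 3 * Nat.choose (j + 1) 2 := by
        refine ih (c - 3) (by omega) _ (by omega) (k - 2) (by omega) ?_ j (by omega)
        intro i hi
        have a1 := h.T_sub i (by omega)
        have a2 := hle (i + 2) (by omega)
        have a3 := choose_aux i
        rw [show i + 2 + 1 = i + 3 from rfl] at a2
        omega
      have a1 := h.T_sub j (by omega)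
      have a2 := hle (j + 2) (by omega)
      have a3 := choose_aux j
      rw [show j + 2 + 1 = j + 3 from rfl] at a2 ⊢
      omega

open Classical in
theorem tight (S : AllowableSeq n) (X : Finset (Fin n)) (m : ℕ) (hm : 1 ≤ m) (hX : 3 * m ≤ X.card)
    (hle : ∀ j ≤ m, S.T X j ≤ 3 * Nat.choose (j + 1) 2) :
    ∃ p r q, S.Tri X p r q ∧ ∀ x ∈ X \ {p, r, q}, ∀ y ∈ X \ {p, r, q}, x ≠ y →
      S.ell X x y < m → 2 ≤ (({p, r, q} : Finset (Fin n)).filter (fun z => S.Lf x y z)).card := by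
  have h1 := hle 1 hm
  obtain ⟨p, r, q, h⟩ := (S.tri (X := X) (by omega)).2 (by simpa using h1)
  refine ⟨p, r, q, h, ?_⟩
  intro x hx y hy hxy hl
  by_contra hc
  have hone := h.one_le hx hxy
  have he := h.ell_eq x y
  have hcard := h.card_sdiff
  generalize hKK : S.ell X x y = l at *
  match l, hl with
  | 0, hl => omega
  | j + 1, hl =>
    have hlow : S.T (X \ {p, r, q}) j = 3 * Nat.choose (j + 1) 2 := by
      refine S.lower _ _ rfl (m - 2) (by omega) ?_ j (by omega)
      intro i hi
      by_cases hm2 : m = 1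
      · have : i = 0 := by omega
        subst this; simp [T_zero]
      · have a1 := h.T_sub i (by omega)
        have a2 := hle (i + 2) (by omega)
        have a3 := choose_aux i
        rw [show i + 2 + 1 = i + 3 from rfl] at a2
        omega
    have hstrict := Finset.card_lt_card (Finset.ssubset_iff_of_subset (h.sub_le j) |>.2
      ⟨(x, y), Finset.mem_filter.2 ⟨Finset.mem_offDiag.2 ⟨hx, hy, hxy⟩, by
        simp only; omega⟩, fun hmem => by
        have := (Finset.mem_filter.1 hmem).2
        simp only at this
        omega⟩)
    have a1 := h.count (j + 2) (by omega)
    have a2 := hle (j + 2) (by omega)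
    have a3 := choose_aux j
    rw [show j + 2 + 1 = j + 3 from rfl] at a2
    unfold T at hlow
    omega

theorem pos_surj (S : AllowableSeq n) (t : ℤ) {j : ℕ} (h1 : 1 ≤ j) (h2 : j ≤ n) :
    ∃ x, S.pos t x = j := by
  have himg : (Finset.univ : Finset (Fin n)).image (S.pos t) = Finset.Icc 1 n := by
    apply Finset.eq_of_subset_of_card_le
    · intro a ha
      obtain ⟨y, _, rfl⟩ := Finset.mem_image.1 ha
      exact Finset.mem_Icc.2 (S.pos_mem t y)
    · rw [Finset.card_image_of_injective _ (S.pos_inj t)]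
      simp
  have : j ∈ (Finset.univ : Finset (Fin n)).image (S.pos t) := by
    rw [himg]; exact Finset.mem_Icc.2 ⟨h1, h2⟩
  obtain ⟨x, _, hx⟩ := Finset.mem_image.1 this
  exact ⟨x, hx⟩

theorem ell_univ (S : AllowableSeq n) {x y : Fin n} {t : ℤ} (h : S.Pass x y t) :
    S.ell Finset.univ x y + 1 = S.pos t x := by
  classical
  unfold ell
  have h3 : (((Finset.univ : Finset (Fin n)).filter (fun z => S.Lf x y z)).image (S.pos t)) =
      Finset.Ico 1 (S.pos t x) := by
    ext j
    simp only [Finset.mem_image, Finset.mem_filter, Finset.mem_univ, true_and, Finset.mem_Ico]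
    constructor
    · rintro ⟨z, hz, rfl⟩
      exact ⟨(S.pos_mem t z).1, (S.Lf_iff h z).1 hz⟩
    · rintro ⟨a, b⟩
      obtain ⟨z, hz⟩ := S.pos_surj t (j := j) a (by have := (S.pos_mem t x).2; omega)
      exact ⟨z, (S.Lf_iff h z).2 (by omega), hz⟩
  have h4 := congrArg Finset.card h3
  rw [Finset.card_image_of_injective _ (S.pos_inj t), Nat.card_Ico] at h4
  have := (S.pos_mem t x).1
  omega

theorem T_le_NLe (S : AllowableSeq n) (hp : HalfPeriod n) (hmem : S.Contains hp) (k : ℕ)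
    (hk : 2 * k < n) : S.T Finset.univ k ≤ hp.NLe k := by
  classical
  obtain ⟨t₀, ht₀⟩ := hmem
  have hex : ∀ e : Fin n × Fin n, ∃ t : ℕ, e.1 ≠ e.2 → t < n * (n - 1) / 2 ∧
      (S.Pass e.1 e.2 (t₀ + t) ∨ S.Pass e.2 e.1 (t₀ + t)) := by
    rintro ⟨x, y⟩
    by_cases hxy : x = y
    · exact ⟨0, fun h => absurd hxy h⟩
    · rcases lt_or_gt_of_ne (S.ne_pos hxy t₀) with hl | hl
      · obtain ⟨t, q1, q2, q3⟩ := S.exists_pass_half hl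
        obtain ⟨k, hk⟩ := Int.eq_ofNat_of_zero_le (sub_nonneg.2 q1)
        have e1 : t = t₀ + k := by omega
        subst e1
        exact ⟨k, fun _ => ⟨by unfold hN at q2; omega, Or.inl q3⟩⟩
      · obtain ⟨t, q1, q2, q3⟩ := S.exists_pass_half hl
        obtain ⟨k, hk⟩ := Int.eq_ofNat_of_zero_le (sub_nonneg.2 q1)
        have e1 : t = t₀ + k := by omega
        subst e1
        exact ⟨k, fun _ => ⟨by unfold hN at q2; omega, Or.inr q3⟩⟩
  choose f hf using hex
  unfold T HalfPeriod.NLe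
  rw [← Set.ncard_coe_finset]
  have hfin : {t : ℕ | t < HalfPeriod.steps n ∧ hp.LeCritical t k}.Finite :=
    (Set.finite_lt_nat (HalfPeriod.steps n)).subset (fun t ht => ht.1)
  refine Set.ncard_le_ncard_of_injOn f ?_ ?_ hfin
  · rintro ⟨x, y⟩ he
    simp only [Finset.coe_filter, Finset.mem_offDiag, Finset.mem_univ, true_and,
      Set.mem_ofPred_eq] at he
    obtain ⟨h1, h2⟩ := hf (x, y) he.1
    refine ⟨h1, ?_⟩
    generalize f (x, y) = t at h1 h2
    have g0 : ∀ z, hp.pos t z = S.pos (t₀ + t) z := fun z => ht₀ t (by omega) z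
    have g1 : ∀ z, hp.pos (t + 1) z = S.pos (t₀ + t + 1) z := fun z => by
      rw [ht₀ (t + 1) (by omega) z]; congr 1; push_cast; ring
    have hrev := S.ell_rev (X := Finset.univ) (Finset.mem_univ x) (Finset.mem_univ y) he.1
    simp only [Finset.card_univ, Fintype.card_fin] at hrev
    rcases h2 with h2 | h2
    · have h3 := S.ell_univ h2
      simp only at h2 h3
      refine ⟨S.ell Finset.univ x y + 1, by omega, by omega, Or.inl ⟨x, y, ?_⟩⟩
      simp only [g0, g1]
      obtain ⟨a1, a2, a3, a4⟩ := h2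
      omega
    · have h3 := S.ell_univ h2
      simp only at h2 h3
      refine ⟨S.ell Finset.univ x y + 1, by omega, by omega, Or.inr ⟨y, x, ?_⟩⟩
      simp only [g0, g1]
      obtain ⟨a1, a2, a3, a4⟩ := h2
      omega
  · rintro ⟨x, y⟩ he ⟨x', y'⟩ he' heq
    simp only [Finset.coe_filter, Finset.mem_offDiag, Finset.mem_univ, true_and,
      Set.mem_ofPred_eq] at he he'
    obtain ⟨h1, h2⟩ := hf (x, y) he.1
    obtain ⟨h1', h2'⟩ := hf (x', y') he'.1
    rw [← heq] at h2'
    have hrev := S.ell_rev (X := Finset.univ) (Finset.mem_univ x) (Finset.mem_univ y) he.1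
    simp only [Finset.card_univ, Fintype.card_fin] at hrev
    simp only at h2 h2'
    rcases h2 with h2 | h2 <;> rcases h2' with h2' | h2' <;>
      obtain ⟨rfl, rfl⟩ := S.pass_unique h2 h2'
    · rfl
    · omega
    · omega
    · rfl

theorem step_le (S : AllowableSeq n) (t : ℤ) (x : Fin n) :
    S.pos (t + 1) x ≤ S.pos t x + 1 ∧ S.pos t x ≤ S.pos (t + 1) x + 1 := by
  obtain ⟨u, v, e1, e2, e3, e4⟩ := S.step t
  by_cases h1 : x = u
  · subst h1; omega
  · by_cases h2 : x = v
    · subst h2; omega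
    · have := e4 x h1 h2
      omega

theorem ivt_down (S : AllowableSeq n) {x : Fin n} {s e : ℤ} {k : ℕ} (hse : s ≤ e)
    (h1 : k < S.pos s x) (h2 : S.pos e x ≤ k) : ∃ t, s < t ∧ t ≤ e ∧ S.pos t x = k := by
  obtain ⟨j, hj⟩ := Int.eq_ofNat_of_zero_le (sub_nonneg.2 hse)
  have e1 : e = s + j := by omega
  subst e1
  clear hj hse
  induction j with
  | zero => simp at h2; omega
  | succ j ih =>
    by_cases h : S.pos (s + j) x ≤ k
    · obtain ⟨t, a, b, c⟩ := ih h
      exact ⟨t, a, by push_cast; omega, c⟩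
    · refine ⟨s + (j + 1 : ℕ), by omega, le_refl _, ?_⟩
      have := S.step_le (s + j) x
      rw [show s + (j : ℤ) + 1 = s + (j + 1 : ℕ) by push_cast; ring] at this
      omega

theorem ivt_up (S : AllowableSeq n) {x : Fin n} {s e : ℤ} {k : ℕ} (hse : s ≤ e)
    (h1 : S.pos s x < k) (h2 : k ≤ S.pos e x) : ∃ t, s < t ∧ t ≤ e ∧ S.pos t x = k := by
  obtain ⟨j, hj⟩ := Int.eq_ofNat_of_zero_le (sub_nonneg.2 hse)
  have e1 : e = s + j := by omega
  subst e1
  clear hj hse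
  induction j with
  | zero => simp at h2; omega
  | succ j ih =>
    by_cases h : k ≤ S.pos (s + j) x
    · obtain ⟨t, a, b, c⟩ := ih h
      exact ⟨t, a, by push_cast; omega, c⟩
    · refine ⟨s + (j + 1 : ℕ), by omega, le_refl _, ?_⟩
      have := S.step_le (s + j) x
      rw [show s + (j : ℤ) + 1 = s + (j + 1 : ℕ) by push_cast; ring] at this
      omega

theorem static_right (S : AllowableSeq n) {m : ℕ} (hm : 1 ≤ m) (hn : n = 3 * m) {u v w : Fin n}
    (H : ∀ x y, x ≠ u → x ≠ v → x ≠ w → y ≠ u → y ≠ v → y ≠ w → x ≠ y →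
      S.ell Finset.univ x y < m → S.Lf x y u ∨ S.Lf x y v) {s e : ℤ} (hse : s ≤ e)
    (hu : ∀ t, s ≤ t → t ≤ e → S.pos t u ≤ 2 * m) (hv : ∀ t, s ≤ t → t ≤ e → S.pos t v ≤ 2 * m)
    (hw : ∀ t, s ≤ t → t ≤ e → S.pos t w = n) (z : Fin n) :
    2 * m < S.pos s z ↔ 2 * m < S.pos e z := by
  obtain ⟨j, hj⟩ := Int.eq_ofNat_of_zero_le (sub_nonneg.2 hse)
  have e1 : e = s + j := by omega
  subst e1
  clear hj hse
  induction j with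
  | zero => simp
  | succ j ih =>
    refine Iff.trans (ih (fun t a b => hu t a (by push_cast; omega))
      (fun t a b => hv t a (by push_cast; omega)) (fun t a b => hw t a (by push_cast; omega))) ?_
    rw [show s + ((j + 1 : ℕ) : ℤ) = s + (j : ℤ) + 1 by push_cast; ring] at *
    generalize ht : s + (j : ℤ) = t at *
    obtain ⟨x, y, hxy⟩ := S.step t
    have hP : S.Pass x y t := hxy
    obtain ⟨a1, a2, a3, a4⟩ := hxy
    have hlev : S.pos t x ≠ 2 * m := by
      intro hx
      have u0 := hu t (by omega) (by omega)
      have u1 := hu (t + 1) (by omega) (by omega)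
      have v0 := hv t (by omega) (by omega)
      have v1 := hv (t + 1) (by omega) (by omega)
      have w0 := hw t (by omega) (by omega)
      have w1 := hw (t + 1) (by omega) (by omega)
      have hrev := S.ell_rev (X := Finset.univ) (Finset.mem_univ x) (Finset.mem_univ y) hP.ne
      have hu1 := S.ell_univ hP
      simp only [Finset.card_univ, Fintype.card_fin] at hrev
      have r1 : x ≠ u := by rintro rfl; omega
      have r2 : x ≠ v := by rintro rfl; omega
      have r3 : x ≠ w := by rintro rfl; omega
      have r4 : y ≠ u := by rintro rfl; omega
      have r5 : y ≠ v := by rintro rfl; omega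
      have r6 : y ≠ w := by rintro rfl; omega
      have := H y x r4 r5 r6 r1 r2 r3 hP.ne.symm (by omega)
      rw [S.Lf_rev hP.ne r1.symm r4.symm, S.Lf_rev hP.ne r2.symm r5.symm, S.Lf_iff hP,
        S.Lf_iff hP] at this
      have := S.ne_pos r1 t
      have := S.ne_pos r2 t
      omega
    by_cases h1 : z = x
    · subst h1; omega
    · by_cases h2 : z = y
      · subst h2; omega
      · rw [a4 z h1 h2]

theorem static_left (S : AllowableSeq n) {m : ℕ} (hm : 1 ≤ m) (hn : n = 3 * m) {u v w : Fin n}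
    (H : ∀ x y, x ≠ u → x ≠ v → x ≠ w → y ≠ u → y ≠ v → y ≠ w → x ≠ y →
      S.ell Finset.univ x y < m → S.Lf x y u ∨ S.Lf x y v) {s e : ℤ} (hse : s ≤ e)
    (hu : ∀ t, s ≤ t → t ≤ e → m < S.pos t u) (hv : ∀ t, s ≤ t → t ≤ e → m < S.pos t v)
    (hw : ∀ t, s ≤ t → t ≤ e → S.pos t w = 1) (z : Fin n) :
    S.pos s z ≤ m ↔ S.pos e z ≤ m := by
  have key := S.static_right hm hn H (s := s + hN n) (e := e + hN n) (by omega)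
    (fun t a b => by
      have h1 := hu (t - hN n) (by omega) (by omega)
      have h2 := S.rev (t - hN n) u
      rw [sub_add_cancel] at h2
      omega)
    (fun t a b => by
      have h1 := hv (t - hN n) (by omega) (by omega)
      have h2 := S.rev (t - hN n) v
      rw [sub_add_cancel] at h2
      omega)
    (fun t a b => by
      have h1 := hw (t - hN n) (by omega) (by omega)
      have h2 := S.rev (t - hN n) w
      rw [sub_add_cancel] at h2
      omega) z
  have h1 := S.rev s z
  have h2 := S.rev e z
  omega

theorem Tri.times {S : AllowableSeq n} {p r q : Fin n} (h : S.Tri Finset.univ p r q) (hn : 3 ≤ n) :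
    ∃ a b c : ℤ, a < c - hN n ∧ c - hN n < b ∧ b < a + hN n ∧
      S.pos a p = 1 ∧ S.pos a r = 2 ∧ S.pos (a + 1) r = 1 ∧
      S.pos b r = 1 ∧ S.pos b q = 2 ∧ S.pos (b + 1) q = 1 ∧
      S.pos c q = 1 ∧ S.pos c p = 2 ∧ S.pos (c + 1) p = 1 := by
  obtain ⟨a, ha⟩ := S.exists_pass_all h.pr
  have la := S.ell_univ ha
  rw [h.epr] at la
  obtain ⟨a1, a2, a3, -⟩ := ha
  have := S.ne_pos h.rq (a + 1)
  have := (S.pos_mem (a + 1) q).1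
  obtain ⟨b, b1, b2, hb⟩ := S.exists_pass_half (x := r) (y := q) (s := a + 1) (by omega)
  have lb := S.ell_univ hb
  rw [h.erq] at lb
  obtain ⟨b3, b4, b5, -⟩ := hb
  have := S.ne_pos h.qp (b + 1)
  have := (S.pos_mem (b + 1) p).1
  obtain ⟨c, c1, c2, hc⟩ := S.exists_pass_half (x := q) (y := p) (s := b + 1) (by omega)
  have lc := S.ell_univ hc
  rw [h.eqp] at lc
  obtain ⟨c3, c4, c5, -⟩ := hc
  have hb' : b ≠ a + hN n := by
    rintro rfl
    have := S.rev a r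
    omega
  have hc' : c ≠ b + hN n := by
    rintro rfl
    have := S.rev b q
    omega
  have hc'' : c ≠ a + hN n := by
    rintro rfl
    have := S.rev a p
    omega
  have hca : a + hN n < c := by
    by_contra hcon
    have := S.mono (x := p) (t0 := a) (by omega) (s := a + 1) (e := c + 1)
      (by omega) (by omega) (by omega)
    omega
  refine ⟨a, b, c, ?_⟩
  omega

/-- Existence of four times cutting a half-period into three pieces. -/
theorem Tri.cuts {S : AllowableSeq n} {p r q : Fin n} (h : S.Tri Finset.univ p r q) {m : ℕ}
    (hm : 1 ≤ m) (hn : n = 3 * m)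
    (H : ∀ x ∈ Finset.univ \ {p, r, q}, ∀ y ∈ Finset.univ \ {p, r, q}, x ≠ y →
      S.ell Finset.univ x y < m →
      (S.Lf x y p ∨ S.Lf x y r) ∧ (S.Lf x y p ∨ S.Lf x y q) ∧ (S.Lf x y q ∨ S.Lf x y r)) :
    ∃ T1 T2 T3 : ℤ, T1 ≤ T2 ∧ T2 ≤ T3 ∧ T3 ≤ T1 + hN n ∧
      (∀ z, 2 * m < S.pos T1 z ↔ 2 * m < S.pos T2 z) ∧
      (∀ z, S.pos T2 z ≤ m ↔ S.pos T3 z ≤ m) ∧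
      (∀ z, 2 * m < S.pos T3 z ↔ 2 * m < S.pos (T1 + hN n) z) := by
  obtain ⟨a, b, c, o1, o2, o3, ap, ar, ar', br, bq, bq', cq, cp, cp'⟩ := h.times (by omega)
  have N0 := hN_nonneg n
  have sh : ∀ (t : ℤ) (x : Fin n), S.pos (t - hN n) x + S.pos t x = n + 1 := by
    intro t x
    have := S.rev (t - hN n) x
    rw [sub_add_cancel] at this
    omega
  have r1 := sh b r
  have r2 := sh c p
  have r3 := sh c q
  -- the three cut times
  obtain ⟨T1, t11, t12, t13⟩ := S.ivt_down (x := r) (s := b - hN n) (e := a) (k := m + 1)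
    (by omega) (by omega) (by omega)
  obtain ⟨T2, t21, t22, t23⟩ := S.ivt_up (x := p) (s := a) (e := c - hN n) (k := m + 1)
    (by omega) (by omega) (by omega)
  obtain ⟨T3, t31, t32, t33⟩ := S.ivt_down (x := q) (s := c - hN n) (e := b) (k := m + 1)
    (by omega) (by omega) (by omega)
  have hmem : ∀ x : Fin n, x ≠ p → x ≠ r → x ≠ q → x ∈ Finset.univ \ ({p, r, q} : Finset (Fin n)) := by
    intro x h1 h2 h3
    simp [h1, h2, h3]
  refine ⟨T1, T2, T3, by omega, by omega, by omega, ?_, ?_, ?_⟩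
  · apply S.static_right hm hn (u := p) (v := r) (w := q)
      (fun x y h1 h2 h3 h4 h5 h6 h7 h8 => (H x (hmem x h1 h2 h3) y (hmem y h4 h5 h6) h7 h8).1)
      (by omega)
    · intro t q1 q2
      have e1 : S.pos (c + 1 - hN n - hN n) p = 1 := by
        have := sh (c + 1) p
        have := sh (c + 1 - hN n) p
        omega
      have := S.mono e1 (s := t) (e := T2) (by omega) (by omega) (by omega)
      omega
    · intro t q1 q2
      have := S.anti (x := r) (t0 := b - hN n) (by omega) (s := T1) (e := t)
        (by omega) (by omega) (by omega)
      omega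
    · intro t q1 q2
      have e1 := sh (b + 1) q
      have := S.anti (x := q) (t0 := b + 1 - hN n) (by omega) (s := t) (e := c - hN n)
        (by omega) (by omega) (by omega)
      have := (S.pos_mem t q).2
      omega
  · apply S.static_left hm hn (u := p) (v := q) (w := r)
      (fun x y h1 h2 h3 h4 h5 h6 h7 h8 => (H x (hmem x h1 h3 h2) y (hmem y h4 h6 h5) h7 h8).2.1)
      (by omega)
    · intro t q1 q2
      have := S.mono ap (s := T2) (e := t) (by omega) (by omega) (by omega)
      omega
    · intro t q1 q2
      have e1 := sh (b + 1) q
      have := S.anti (x := q) (t0 := b + 1 - hN n) (by omega) (s := t) (e := T3)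
        (by omega) (by omega) (by omega)
      omega
    · intro t q1 q2
      have := S.mono ar' (s := t) (e := b) (by omega) (by omega) (by omega)
      have := (S.pos_mem t r).1
      omega
  · apply S.static_right hm hn (u := q) (v := r) (w := p)
      (fun x y h1 h2 h3 h4 h5 h6 h7 h8 => (H x (hmem x h3 h2 h1) y (hmem y h6 h5 h4) h7 h8).2.2)
      (by omega)
    · intro t q1 q2
      have := S.anti (x := q) (t0 := c - hN n) (by omega) (s := T3) (e := t)
        (by omega) (by omega) (by omega)
      omega
    · intro t q1 q2
      have := S.mono ar' (s := t) (e := T1 + hN n) (by omega) (by omega) (by omega)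
      have := S.rev T1 r
      omega
    · intro t q1 q2
      have e1 := sh (c + 1) p
      have e2 := S.rev a p
      have := S.anti (x := p) (t0 := c + 1 - hN n) (by omega) (s := t) (e := a + hN n)
        (by omega) (by omega) (by omega)
      have := (S.pos_mem t p).2
      omega

theorem two_of_three {p r q : Fin n} (P : Fin n → Prop) [DecidablePred P]
    (h : 2 ≤ (({p, r, q} : Finset (Fin n)).filter P).card) :
    (P p ∨ P r) ∧ (P p ∨ P q) ∧ (P q ∨ P r) := by
  have aux : ∀ w : Fin n, ¬ (({p, r, q} : Finset (Fin n)).filter P ⊆ {w}) := by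
    intro w hw
    have := Finset.card_le_card hw
    simp at this
    omega
  refine ⟨?_, ?_, ?_⟩
  · by_contra hc
    push Not at hc
    apply aux q
    intro z hz
    simp only [Finset.mem_filter, Finset.mem_insert, Finset.mem_singleton] at hz ⊢
    obtain ⟨rfl | rfl | rfl, h2⟩ := hz <;> tauto
  · by_contra hc
    push Not at hc
    apply aux r
    intro z hz
    simp only [Finset.mem_filter, Finset.mem_insert, Finset.mem_singleton] at hz ⊢
    obtain ⟨rfl | rfl | rfl, h2⟩ := hz <;> tauto
  · by_contra hc
    push Not at hc
    apply aux p
    intro z hz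
    simp only [Finset.mem_filter, Finset.mem_insert, Finset.mem_singleton] at hz ⊢
    obtain ⟨rfl | rfl | rfl, h2⟩ := hz <;> tauto

/-- the half-period of `S` starting at time `t₀` -/
def half (S : AllowableSeq n) (t₀ : ℤ) : HalfPeriod n where
  pos t x := S.pos (t₀ + t) x
  pos_mem t _ x := S.pos_mem _ x
  pos_inj t _ := S.pos_inj _
  step t _ := by
    obtain ⟨x, y, h⟩ := S.step (t₀ + t)
    refine ⟨x, y, ?_⟩
    have e : t₀ + ((t + 1 : ℕ) : ℤ) = t₀ + t + 1 := by push_cast; ring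
    rw [e]
    exact h
  reverse x := by
    have := S.reverse t₀ x
    simpa using this

theorem swaps_pass (S : AllowableSeq n) {t₀ : ℤ} {s : ℕ} {x y : Fin n}
    (h : (S.half t₀).SwapsAt s x y) : S.Pass x y (t₀ + s) ∨ S.Pass y x (t₀ + s) := by
  obtain ⟨hne, h1, h2⟩ := h
  unfold HalfPeriod.Moved at h1 h2
  have e : t₀ + ((s + 1 : ℕ) : ℤ) = t₀ + s + 1 := by push_cast; ring
  simp only [half, e] at h1 h2
  obtain ⟨u, v, huv⟩ := S.step (t₀ + s)
  have hP : S.Pass u v (t₀ + s) := huv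
  have hx : x = u ∨ x = v := by
    by_contra hc
    push Not at hc
    exact h1 (huv.2.2.2 x hc.1 hc.2)
  have hy : y = u ∨ y = v := by
    by_contra hc
    push Not at hc
    exact h2 (huv.2.2.2 y hc.1 hc.2)
  rcases hx with rfl | rfl <;> rcases hy with rfl | rfl
  · exact absurd rfl hne
  · exact Or.inl hP
  · exact Or.inr hP
  · exact absurd rfl hne

theorem swap_time (S : AllowableSeq n) {t₀ : ℤ} {s : ℕ} {x y : Fin n}
    (h : (S.half t₀).SwapsAt s x y) (hs : s < HalfPeriod.steps n)
    (h0 : S.pos t₀ x < S.pos t₀ y) {τ : ℤ} (h1 : t₀ ≤ τ) (h2 : τ ≤ t₀ + hN n) :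
    (S.pos τ y < S.pos τ x → t₀ + s < τ) ∧ (S.pos τ x < S.pos τ y → τ ≤ t₀ + s) := by
  have hs' : (s : ℤ) < hN n := by
    unfold HalfPeriod.steps at hs
    unfold hN
    exact_mod_cast hs
  rcases S.swaps_pass h with hP | hP
  · constructor
    · intro hh
      by_contra hc
      have := S.before hP τ (by omega) (by omega)
      omega
    · intro hh
      by_contra hc
      have := S.after hP τ (by omega) (by omega)
      omega
  · exfalso
    have := S.before hP t₀ (by omega) (by omega)
    omega

theorem SwapsAt_symm (S : AllowableSeq n) {t₀ : ℤ} {s : ℕ} {x y : Fin n}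
    (h : (S.half t₀).SwapsAt s x y) : (S.half t₀).SwapsAt s y x := ⟨h.1.symm, h.2.2, h.2.1⟩

/-- If two subsets given by positions agree ... counting argument. -/
theorem block_eq (S : AllowableSeq n) {m : ℕ} {t t' : ℤ} (hn : n = 3 * m)
    (h : ∀ z, S.pos t' z ≤ m → m < S.pos t z ∧ S.pos t z ≤ 2 * m) :
    ∀ z, (m < S.pos t z ∧ S.pos t z ≤ 2 * m) → S.pos t' z ≤ m := by
  classical
  have c1 : ((Finset.univ : Finset (Fin n)).filter (fun z => S.pos t' z ≤ m)).card = m := by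
    rw [← Finset.card_image_of_injective _ (S.pos_inj t')]
    have : ((Finset.univ : Finset (Fin n)).filter (fun z => S.pos t' z ≤ m)).image (S.pos t') =
        Finset.Icc 1 m := by
      ext j
      simp only [Finset.mem_image, Finset.mem_filter, Finset.mem_univ, true_and, Finset.mem_Icc]
      constructor
      · rintro ⟨z, hz, rfl⟩
        exact ⟨(S.pos_mem t' z).1, hz⟩
      · rintro ⟨a, b⟩
        obtain ⟨z, hz⟩ := S.pos_surj t' (j := j) a (by omega)
        exact ⟨z, by omega, hz⟩
    rw [this]; simp
  have c2 : ((Finset.univ : Finset (Fin n)).filter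
      (fun z => m < S.pos t z ∧ S.pos t z ≤ 2 * m)).card = m := by
    rw [← Finset.card_image_of_injective _ (S.pos_inj t)]
    have : ((Finset.univ : Finset (Fin n)).filter
        (fun z => m < S.pos t z ∧ S.pos t z ≤ 2 * m)).image (S.pos t) =
        Finset.Ioc m (2 * m) := by
      ext j
      simp only [Finset.mem_image, Finset.mem_filter, Finset.mem_univ, true_and, Finset.mem_Ioc]
      constructor
      · rintro ⟨z, hz, rfl⟩
        exact hz
      · rintro ⟨a, b⟩
        obtain ⟨z, hz⟩ := S.pos_surj t (j := j) (by omega) (by omega)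
        exact ⟨z, by omega, hz⟩
    rw [this, Nat.card_Ioc]; omega
  have hsub : ((Finset.univ : Finset (Fin n)).filter (fun z => S.pos t' z ≤ m)) ⊆
      ((Finset.univ : Finset (Fin n)).filter (fun z => m < S.pos t z ∧ S.pos t z ≤ 2 * m)) := by
    intro z hz
    simp only [Finset.mem_filter, Finset.mem_univ, true_and] at hz ⊢
    exact h z hz
  have heq := Finset.eq_of_subset_of_card_le hsub (by omega)
  intro z hz
  have : z ∈ ((Finset.univ : Finset (Fin n)).filter (fun z => S.pos t' z ≤ m)) := by
    rw [heq]; simp only [Finset.mem_filter, Finset.mem_univ, true_and]; exact hz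
  simpa using this

end AllowableSeq

/-- Let `n` be a positive multiple of `3` and let `Π` be an
`n`-half-period of an allowable sequence `𝚷` with `N_{≤k}(Π) = 3·C(k+1,2)` for every
`1 ≤ k ≤ n/3`. Then `𝚷` contains a 3-decomposable `n`-half-period. -/
theorem allowable_contains_three_decomposable (n : ℕ) (hn : 0 < n) (h3 : 3 ∣ n)
    (S : AllowableSeq n) (hp : HalfPeriod n) (hmem : S.Contains hp)
    (hN : ∀ k : ℕ, 1 ≤ k → k ≤ n / 3 → hp.NLe k = 3 * Nat.choose (k + 1) 2) :
    ∃ hp' : HalfPeriod n, S.Contains hp' ∧ hp'.ThreeDecomposable := by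
  classical
  obtain ⟨m, hm⟩ := h3
  have hdiv : n / 3 = m := by omega
  have hm1 : 1 ≤ m := by omega
  obtain ⟨p, r, q, hT, hQ⟩ := S.tight Finset.univ m hm1 (by simp [hm]) (by
    intro j hj
    rcases Nat.eq_zero_or_pos j with rfl | hj0
    · simp [AllowableSeq.T_zero]
    · rw [← hN j hj0 (by omega)]
      exact S.T_le_NLe hp hmem j (by omega))
  obtain ⟨T1, T2, T3, o1, o2, o3, k1, k2, k3⟩ := hT.cuts hm1 hm (by
    intro x hx y hy hxy hl
    exact AllowableSeq.two_of_three _ (hQ x hx y hy hxy hl))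
  have hD : ∀ z, S.pos T2 z ≤ m → m < S.pos T1 z ∧ S.pos T1 z ≤ 2 * m := by
    intro z hz
    have a1 := k1 z
    have a2 := k2 z
    have a3 := k3 z
    have a4 := S.rev T1 z
    omega
  have hB := S.block_eq (t := T1) (t' := T2) hm hD
  have memC : ∀ z, 2 * m < S.pos T1 z → 2 * m < S.pos T2 z ∧ m < S.pos T3 z ∧
      S.pos T3 z ≤ 2 * m := by
    intro z hz
    have a1 := k1 z
    have a2 := k2 z
    have a3 := k3 z
    have a4 := S.rev T1 z
    omega
  have memA : ∀ z, S.pos T1 z ≤ m → m < S.pos T2 z ∧ S.pos T2 z ≤ 2 * m ∧ 2 * m < S.pos T3 z := by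
    intro z hz
    have a1 := k1 z
    have a2 := k2 z
    have a3 := k3 z
    have a4 := S.rev T1 z
    have a5 := hD z
    omega
  have memB : ∀ z, m < S.pos T1 z → S.pos T1 z ≤ 2 * m → S.pos T2 z ≤ m ∧ S.pos T3 z ≤ m := by
    intro z hz hz'
    have a2 := k2 z
    have a5 := hB z ⟨hz, hz'⟩
    exact ⟨a5, a2.1 a5⟩
  have exA : ∀ i : Fin (n / 3), ∃ x, S.pos T1 x = n / 3 - (i : ℕ) := fun i =>
    S.pos_surj T1 (by have := i.2; omega) (by omega)
  have exB : ∀ i : Fin (n / 3), ∃ x, S.pos T1 x = n / 3 + (i : ℕ) + 1 := fun i =>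
    S.pos_surj T1 (by omega) (by have := i.2; omega)
  have exC : ∀ i : Fin (n / 3), ∃ x, S.pos T1 x = 2 * (n / 3) + (i : ℕ) + 1 := fun i =>
    S.pos_surj T1 (by omega) (by have := i.2; omega)
  choose a ha using exA
  choose b hb using exB
  choose c hc using exC
  have ha' : ∀ i, S.pos T1 (a i) ≤ m := fun i => by have := ha i; omega
  have hb' : ∀ i, m < S.pos T1 (b i) ∧ S.pos T1 (b i) ≤ 2 * m := fun i => by
    have := hb i; have := i.2; omega
  have hc' : ∀ i, 2 * m < S.pos T1 (c i) := fun i => by have := hc i; omega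
  refine ⟨S.half T1, ⟨T1, fun t _ x => rfl⟩, a, b, c, ?_, ?_, ?_, ?_, ?_, ?_⟩
  · intro u v huv
    rcases u with i | i | i <;> rcases v with j | j | j <;>
      simp only [Sum.elim_inl, Sum.elim_inr] at huv <;>
      have hpos := congrArg (S.pos T1) huv <;>
      simp only [ha, hb, hc] at hpos <;>
      have hi := i.2 <;> have hj := j.2
    all_goals first
      | (exfalso; omega)
      | (congr 2; exact Fin.ext (by omega))
  · intro i
    simpa [AllowableSeq.half] using ha i
  · intro i
    simpa [AllowableSeq.half] using hb i
  · intro i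
    simpa [AllowableSeq.half] using hc i
  · rintro s t hs ht ⟨i, j, h1⟩ ⟨l, x, hx, h2⟩
    have b1 := ha' i
    have b2 := hb' j
    have b3 := hc' l
    have m1 := memA _ b1
    have m2 := memB _ b2.1 b2.2
    have m3 := memC _ b3
    have g1 := (S.swap_time h1 hs (by omega) o1 (by omega)).1 (by omega)
    have hx2 : S.pos T1 x ≤ 2 * m ∧ S.pos T2 x ≤ 2 * m := by
      rcases hx with ⟨j, rfl⟩ | ⟨j, rfl⟩
      · have := ha' j
        have := memA _ this
        omega
      · have := hb' j
        have := memB _ this.1 this.2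
        omega
    have g2 := (S.swap_time (S.SwapsAt_symm h2) ht (by omega) o1 (by omega)).2 (by omega)
    omega
  · rintro s t hs ht ⟨i, j, h1⟩ ⟨l, l', h2⟩
    have m1 := memA _ (ha' i)
    have m2 := memC _ (hc' j)
    have m3 := memB _ (hb' l).1 (hb' l).2
    have m4 := memC _ (hc' l')
    have b1 := ha' i
    have b2 := hc' j
    have b3 := hb' l
    have b4 := hc' l'
    have g1 := (S.swap_time h1 hs (by omega) (τ := T3) (by omega) o3).1 (by omega)
    have g2 := (S.swap_time h2 ht (by omega) (τ := T3) (by omega) o3).2 (by omega)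
    omega
end
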